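/- The common lines operator C is a compact self-adjoint operator on the Hilbert space H whose set of nonzero eigenvalues is exactly { λ_n = (−1)^{n−1}/(n(n+1)) : n = 1, 2, 3, … }, and for every n ≥ 1 the eigenspace of C associated with the eigenvalue λ_n has dimension 2n+1. -/

import Mathlib

noncomputable section

open MeasureTheory Submodule
open scoped RealInnerProductSpace

abbrev V : Type := EuclideanSpace ℝ (Fin 3)

abbrev S2 : Type := Metric.sphere (0 : V) 1

/-- The plane `x^⊥` orthogonal to a point `x` of the unit sphere. -/
def plane (x : S2) : Submodule ℝ V := (ℝ ∙ (x : V))ᗮ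

/-- The common line `x^⊥ ∩ y^⊥`. -/
def cline (x y : S2) : Submodule ℝ V := plane x ⊓ plane y

/-- The common-lines kernel `C(x,y) : V → V`: orthogonal projection onto the
line `x^⊥ ∩ y^⊥`.  Its restriction to `y^⊥` is the kernel of the paper: it sends
`v ∈ y^⊥` to the orthogonal projection of `v` onto `x^⊥ ∩ y^⊥`, viewed inside `x^⊥`
(projecting the ambient `V` first onto `y^⊥` does not change the result). -/
def Cker (x y : S2) : V →ₗ[ℝ] V :=
  (cline x y).subtype ∘ₗ (orthogonalProjection (cline x y)).toLinearMap

/-- The map on the sphere induced by a linear isometry of `V`. -/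
def sphereMap (g : V ≃ₗᵢ[ℝ] V) (x : S2) : S2 :=
  ⟨g x, by
    have := mem_sphere_zero_iff_norm.mp x.2
    simp [mem_sphere_zero_iff_norm, this]⟩

/-- The Hilbert space `H` of square integrable sections of the bundle of planes, realized as
the subspace of `L²` maps `s : S² → V` with `s x ∈ x^⊥` almost everywhere; it carries the
inner product `(s₁, s₂) = ∫ ⟪s₁ x, s₂ x⟫ dx` inherited from `L²`. -/
def Hsub (μ : Measure S2) : Submodule ℝ (Lp V 2 μ) where
  carrier := {f | ∀ᵐ x ∂μ, f x ∈ plane x}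
  add_mem' := by
    intro f g hf hg
    filter_upwards [hf, hg, Lp.coeFn_add f g] with x h1 h2 h3
    simp only [Pi.add_apply] at h3
    rw [h3]; exact add_mem h1 h2
  zero_mem' := by
    filter_upwards [Lp.coeFn_zero V 2 μ] with x h
    simp only [Pi.zero_apply] at h
    rw [h]; exact zero_mem _
  smul_mem' := by
    intro c f hf
    filter_upwards [hf, Lp.coeFn_smul c f] with x h1 h2
    simp only [Pi.smul_apply] at h2
    rw [h2]; exact smul_mem _ _ h1

abbrev Pol : Type := MvPolynomial (Fin 3) ℝ

def lin (a : V) : Pol := ∑ i, MvPolynomial.C (a i) * MvPolynomial.X i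

def lap : Pol →ₗ[ℝ] Pol :=
  ∑ i, (MvPolynomial.pderiv i).toLinearMap ∘ₗ (MvPolynomial.pderiv i).toLinearMap

theorem lap_apply (p : Pol) : lap p = ∑ i, MvPolynomial.pderiv i (MvPolynomial.pderiv i p) := by
  simp [lap]

theorem pderiv_lin (a : V) (i : Fin 3) :
    MvPolynomial.pderiv i (lin a) = MvPolynomial.C (a i) := by
  simp [lin, MvPolynomial.pderiv_X, Pi.single_apply]

theorem pderiv_lin_pow (a : V) (i : Fin 3) (k : ℕ) :
    MvPolynomial.pderiv i (lin a ^ k) = ((k : ℝ) * a i) • lin a ^ (k - 1) := by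
  rw [Derivation.leibniz_pow, pderiv_lin, MvPolynomial.smul_eq_C_mul]
  simp [MvPolynomial.smul_eq_C_mul]; ring

theorem lap_lin_pow (a : V) (k : ℕ) :
    lap (lin a ^ (k + 2)) = (((k : ℝ) + 2) * (k + 1) * ‖a‖ ^ 2) • lin a ^ k := by
  rw [lap_apply, EuclideanSpace.real_norm_sq_eq, Finset.mul_sum, Finset.sum_smul]
  refine Finset.sum_congr rfl fun i _ => ?_
  rw [pderiv_lin_pow, Derivation.map_smul, show k + 2 - 1 = k + 1 from rfl, pderiv_lin_pow, smul_smul]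
  simp only [Nat.add_sub_cancel]
  congr 1; push_cast; ring

theorem iter_lap_lin_pow (j k : ℕ) :
    ∃ c : ℝ, 0 < c ∧ ∀ a : V, (lap ^ j) (lin a ^ (k + 2 * j)) = (c * (‖a‖ ^ 2) ^ j) • lin a ^ k := by
  induction j with
  | zero => exact ⟨1, one_pos, fun a => by simp⟩
  | succ j ih =>
    obtain ⟨c, hc, h⟩ := ih
    refine ⟨(((k + 2 * j : ℕ) : ℝ) + 2) * ((k + 2 * j : ℕ) + 1) * c, by positivity, fun a => ?_⟩
    rw [pow_succ, Module.End.mul_apply, show k + 2 * (j + 1) = (k + 2 * j) + 2 by ring,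
      lap_lin_pow, map_smul, h, smul_smul]
    congr 1; ring

theorem lin_homog (a : V) : (lin a).IsHomogeneous 1 :=
  MvPolynomial.IsHomogeneous.sum _ _ _ fun i _ => MvPolynomial.isHomogeneous_C_mul_X _ _

theorem lin_pow_homog (a : V) (k : ℕ) : (lin a ^ k).IsHomogeneous k := by
  simpa using (lin_homog a).pow k

theorem curve_mem {M : Type*} [AddCommGroup M] [Module ℝ M] (S : Submodule ℝ M) (n : ℕ)
    (v : ℕ → M) (h : ∀ t : ℝ, ∑ i ∈ Finset.range n, t ^ i • v i ∈ S) (i : ℕ) (hi : i < n) :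
    v i ∈ S := by
  by_contra hv
  obtain ⟨f, hf, hS⟩ := Submodule.exists_le_ker_of_notMem hv
  have : (∑ i ∈ Finset.range n, Polynomial.C (f (v i)) * Polynomial.X ^ i : Polynomial ℝ) = 0 := by
    apply Polynomial.funext
    intro t
    have := hS (h t)
    simp only [LinearMap.mem_ker, map_sum, map_smul, smul_eq_mul] at this
    simp only [Polynomial.eval_finsetSum, Polynomial.eval_mul, Polynomial.eval_C,
      Polynomial.eval_pow, Polynomial.eval_X, Polynomial.eval_zero]
    rw [← this]; exact Finset.sum_congr rfl fun _ _ => mul_comm _ _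
  have h2 := congrArg (fun p => Polynomial.coeff p i) this
  simp [Polynomial.coeff_C_mul, Polynomial.coeff_X_pow, hi] at h2
  exact hf h2

theorem span_lin_pow (k : ℕ) (p : Pol) (hp : p.IsHomogeneous k) :
    p ∈ span ℝ (Set.range fun a : V => lin a ^ k) := by
  set S := span ℝ (Set.range fun a : V => lin a ^ k) with hS
  have h1 : ∀ t s : ℝ, (MvPolynomial.X 0 + t • MvPolynomial.X 1 + s • MvPolynomial.X 2 : Pol) ^ k ∈ S := by
    intro t s
    refine subset_span ⟨!₂[1, t, s], ?_⟩
    simp [lin, Fin.sum_univ_three, MvPolynomial.smul_eq_C_mul]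
  have h2 : ∀ t : ℝ, ∀ c ≤ k, 
      (MvPolynomial.X 2 ^ c * (MvPolynomial.X 0 + t • MvPolynomial.X 1) ^ (k - c) : Pol) ∈ S := by
    intro t c hc
    have := curve_mem S (k + 1) (fun c => ((k.choose c : ℝ)) • (MvPolynomial.X 2 ^ c * (MvPolynomial.X 0 + t • MvPolynomial.X 1) ^ (k - c) : Pol))
      (fun s => by
        convert h1 t s using 1
        rw [add_comm (_ + _), add_pow]
        refine Finset.sum_congr rfl fun i _ => ?_
        simp only [MvPolynomial.smul_eq_C_mul, mul_pow, map_pow, map_natCast]; ring) c (by omega)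
    exact (S.smul_mem_iff (by exact_mod_cast (Nat.choose_pos hc).ne')).1 this
  have h3 : ∀ c ≤ k, ∀ b ≤ k - c, 
      (MvPolynomial.X 2 ^ c * (MvPolynomial.X 1 ^ b * MvPolynomial.X 0 ^ (k - c - b)) : Pol) ∈ S := by
    intro c hc b hb
    have := curve_mem S (k - c + 1) (fun b => (((k-c).choose b : ℝ)) • (MvPolynomial.X 2 ^ c * (MvPolynomial.X 1 ^ b * MvPolynomial.X 0 ^ (k - c - b)) : Pol))
      (fun s => by
        convert h2 s c hc using 1
        rw [add_comm (MvPolynomial.X 0), add_pow, Finset.mul_sum]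
        refine Finset.sum_congr rfl fun i _ => ?_
        simp only [MvPolynomial.smul_eq_C_mul, mul_pow, map_pow, map_natCast]; ring) b (by omega)
    exact (S.smul_mem_iff (by exact_mod_cast (Nat.choose_pos hb).ne')).1 this
  rw [p.as_sum]
  refine S.sum_mem fun d hd => ?_
  have hdeg : d.degree = k := by
    by_contra hne
    exact (MvPolynomial.mem_support_iff.1 hd) (hp.coeff_eq_zero hne)
  rw [Finsupp.degree_eq_sum, Fin.sum_univ_three] at hdeg
  rw [MvPolynomial.monomial_eq, ← MvPolynomial.smul_eq_C_mul]
  refine S.smul_mem _ ?_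
  rw [Finsupp.prod_fintype _ _ (by simp), Fin.prod_univ_three]
  have := h3 (d 2) (by omega) (d 1) (by omega)
  convert this using 1
  rw [show k - d 2 - d 1 = d 0 by omega]; ring

theorem finrank_hom (k : ℕ) :
    Module.finrank ℝ (MvPolynomial.homogeneousSubmodule (Fin 3) ℝ k) = (k + 2).choose 2 := by
  have h1 : MvPolynomial.homogeneousSubmodule (Fin 3) ℝ k =
      span ℝ (Set.range fun d : Finset.finsuppAntidiag (Finset.univ : Finset (Fin 3)) k =>
        (MvPolynomial.monomial d.1 (1 : ℝ) : Pol)) := by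
    rw [MvPolynomial.homogeneousSubmodule_eq_finsupp_supported,
      AddMonoidAlgebra.supported_eq_span_single]
    congr 1
    ext p
    simp [Finset.mem_finsuppAntidiag, Finsupp.degree_eq_sum]
    rfl
  rw [h1, finrank_span_eq_card]
  · rw [Fintype.card_coe, Finset.card_finsuppAntidiag_nat_eq_choose]
    simp only [Finset.card_univ, Fintype.card_fin]
    rw [show 3 + k - 1 = k + 2 by omega, ← Nat.choose_symm_add]
  · exact (MvPolynomial.basisMonomials (Fin 3) ℝ).linearIndependent.comp _ Subtype.val_injective

instance (k : ℕ) : Module.Finite ℝ (MvPolynomial.homogeneousSubmodule (Fin 3) ℝ k) :=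
  Module.Finite.iff_fg.2 (MvPolynomial.homogeneousSubmodule_fg (Fin 3) ℝ k)

def Harm (k : ℕ) : Submodule ℝ Pol :=
  MvPolynomial.homogeneousSubmodule (Fin 3) ℝ k ⊓ LinearMap.ker lap

instance (k : ℕ) : Module.Finite ℝ (Harm k) :=
  Submodule.finiteDimensional_of_le (inf_le_left : Harm k ≤ _)

theorem lap_homog {k : ℕ} {p : Pol} (hp : p.IsHomogeneous k) : (lap p).IsHomogeneous (k - 2) := by
  rw [lap_apply]
  exact MvPolynomial.IsHomogeneous.sum _ _ _ fun i _ => hp.pderiv.pderiv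

theorem finrank_harm (k : ℕ) (hk : 1 ≤ k) : 2 * k + 1 ≤ Module.finrank ℝ (Harm k) := by
  rcases Nat.lt_or_ge k 2 with h2 | h2
  · obtain rfl : k = 1 := by omega
    have : Harm 1 = MvPolynomial.homogeneousSubmodule (Fin 3) ℝ 1 := by
      refine inf_eq_left.2 fun p hp => ?_
      rw [LinearMap.mem_ker, lap_apply]
      refine Finset.sum_eq_zero fun i _ => ?_
      have h0 : (MvPolynomial.pderiv i p).IsHomogeneous 0 := MvPolynomial.IsHomogeneous.pderiv hp
      rw [← MvPolynomial.totalDegree_zero_iff_isHomogeneous,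
        MvPolynomial.totalDegree_eq_zero_iff_eq_C] at h0
      rw [h0, MvPolynomial.pderiv_C]
    rw [this, finrank_hom]; decide
  · let L : MvPolynomial.homogeneousSubmodule (Fin 3) ℝ k →ₗ[ℝ]
      MvPolynomial.homogeneousSubmodule (Fin 3) ℝ (k - 2) := lap.restrict fun p hp => lap_homog hp
    have h3 := LinearMap.finrank_range_add_finrank_ker L
    have h4 := Submodule.finrank_le (LinearMap.range L)
    have h5 : (LinearMap.ker L).map (Submodule.subtype _) ≤ Harm k := by
      rintro _ ⟨p, hp, rfl⟩
      refine ⟨p.2, ?_⟩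
      exact congrArg Subtype.val (LinearMap.mem_ker.1 hp)
    have h6 := Submodule.finrank_mono h5
    rw [Submodule.finrank_map_subtype_eq] at h6
    rw [finrank_hom] at h3 h4
    obtain ⟨m, rfl⟩ : ∃ m, k = m + 2 := ⟨k - 2, by omega⟩
    have e1 : (m + 2 + 2).choose 2 = (m + 2).choose 2 + (m + 2) + (m + 3) := by
      rw [Nat.choose_succ_succ' (m + 3) 1, Nat.choose_succ_succ' (m + 2) 1]; simp; ring
    simp only [Nat.add_sub_cancel] at h4
    refine le_trans ?_ h6
    omega

theorem harm_inj (k : ℕ) (hk : 1 ≤ k) (f : Pol) (hf : f ∈ Harm k)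
    (h : ∀ y : S2, ∀ i, MvPolynomial.eval (y : V) (MvPolynomial.pderiv i f)
      = k * MvPolynomial.eval (y : V) f * (y : V) i) : f = 0 := by
  have hh : f.IsHomogeneous k := hf.1
  have hev : ∀ (n : ℕ) (p : Pol), p.IsHomogeneous n → ∀ (r : ℝ) (y : Fin 3 → ℝ),
      MvPolynomial.eval (r • y) p = r ^ n * MvPolynomial.eval y p := by
    intro n p hp r y
    rw [MvPolynomial.eval_eq', MvPolynomial.eval_eq', Finset.mul_sum]
    refine Finset.sum_congr rfl fun d hd => ?_
    have hdeg : d.degree = n := by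
      by_contra hne
      exact (MvPolynomial.mem_support_iff.1 hd) (hp.coeff_eq_zero hne)
    rw [Finsupp.degree_eq_sum] at hdeg
    simp only [Pi.smul_apply, smul_eq_mul, mul_pow, Finset.prod_mul_distrib,
      Finset.prod_pow_eq_pow_sum, hdeg]
    ring
  have key : ∀ i, (∑ j, MvPolynomial.X j ^ 2 : Pol) * MvPolynomial.pderiv i f
      = (k : Pol) * MvPolynomial.X i * f := by
    intro i
    apply MvPolynomial.funext
    intro y
    simp only [map_mul, map_sum, map_pow, MvPolynomial.eval_X, map_natCast]
    by_cases hy : y = 0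
    · simp [hy]
    set z : V := WithLp.toLp 2 y
    have hz : z ≠ 0 := by
      intro h0; apply hy; ext i; exact congrArg (fun w : V => w i) h0
    have hn : ‖z‖ ≠ 0 := norm_ne_zero_iff.2 hz
    have hu : (‖z‖⁻¹ • z) ∈ Metric.sphere (0 : V) 1 := by
      simp [norm_smul, hn]
    have h1 := h ⟨_, hu⟩ i
    have hy2 : y = ‖z‖ • ((‖z‖⁻¹ • z : V) : Fin 3 → ℝ) := by
      ext i; simp [hn, z]
    have hs : ∑ j, y j ^ 2 = ‖z‖ ^ 2 := by rw [EuclideanSpace.real_norm_sq_eq]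
    rw [hs]
    have h2 := hev _ _ (hh.pderiv (i := i)) ‖z‖ ((‖z‖⁻¹ • z : V) : Fin 3 → ℝ)
    have h3 := hev _ _ hh ‖z‖ ((‖z‖⁻¹ • z : V) : Fin 3 → ℝ)
    rw [← hy2] at h2 h3
    rw [h2, h3, h1]
    have h4 : y i = ‖z‖ * (‖z‖⁻¹ • z : V) i := congrFun hy2 i
    rw [h4]
    obtain ⟨m, rfl⟩ : ∃ m, k = m + 1 := ⟨k - 1, by omega⟩
    simp only [Nat.add_sub_cancel]
    ring
  have key2 : ∑ i, MvPolynomial.pderiv i ((∑ j, MvPolynomial.X j ^ 2 : Pol) * MvPolynomial.pderiv i f)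
      = ∑ i, MvPolynomial.pderiv i ((k : Pol) * MvPolynomial.X i * f) :=
    Finset.sum_congr rfl fun i _ => by rw [key i]
  have eul := hh.sum_X_mul_pderiv
  have hl : lap f = 0 := hf.2
  rw [lap_apply] at hl
  simp only [Fin.sum_univ_three] at key2 eul hl
  simp [Derivation.leibniz, Derivation.leibniz_pow, MvPolynomial.pderiv_X, Pi.single_apply] at key2 eul
  have : ((k * (k + 1) : ℕ) : Pol) * f = 0 := by
    push_cast
    linear_combination (-1 : Pol) * key2 + (MvPolynomial.X 0 ^ 2 + MvPolynomial.X 1 ^ 2 + MvPolynomial.X 2 ^ 2) * hl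
      + (2 - (k : Pol)) * eul
  rcases mul_eq_zero.1 this with h0 | h0
  · exfalso
    have : k * (k + 1) = 0 := by exact_mod_cast h0
    simp at this; omega
  · exact h0

def cr (x y : V) : V := !₂[x 1 * y 2 - x 2 * y 1, x 2 * y 0 - x 0 * y 2, x 0 * y 1 - x 1 * y 0]

theorem inner3 (x y : V) : ⟪x, y⟫ = x 0 * y 0 + x 1 * y 1 + x 2 * y 2 := by
  simp [PiLp.inner_apply, Fin.sum_univ_three]; ring

theorem cr0 (x y : V) : cr x y 0 = x 1 * y 2 - x 2 * y 1 := rfl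
theorem cr1 (x y : V) : cr x y 1 = x 2 * y 0 - x 0 * y 2 := rfl
theorem cr2 (x y : V) : cr x y 2 = x 0 * y 1 - x 1 * y 0 := rfl

theorem vext {x y : V} (h0 : x 0 = y 0) (h1 : x 1 = y 1) (h2 : x 2 = y 2) : x = y := by
  ext i; fin_cases i <;> assumption

theorem cr_inner_left (x y : V) : ⟪cr x y, x⟫ = 0 := by
  simp only [inner3, cr0, cr1, cr2]; ring

theorem cr_inner_right (x y : V) : ⟪cr x y, y⟫ = 0 := by
  simp only [inner3, cr0, cr1, cr2]; ring

theorem cr_norm_sq (x y : V) : ‖cr x y‖ ^ 2 = ‖x‖ ^ 2 * ‖y‖ ^ 2 - ⟪x, y⟫ ^ 2 := by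
  simp only [← real_inner_self_eq_norm_sq, inner3, cr0, cr1, cr2]; ring

theorem cr_swap (x y : V) : cr x y = - cr y x := by
  apply vext <;> simp only [PiLp.neg_apply, cr0, cr1, cr2] <;> ring

theorem cr_span (x y z : V) (hx : ⟪x, z⟫ = 0) (hy : ⟪y, z⟫ = 0) :
    ‖cr x y‖ ^ 2 • z = ⟪cr x y, z⟫ • cr x y := by
  have e : ‖cr x y‖ ^ 2 • z - ⟪cr x y, z⟫ • cr x y
      = ⟪y, z⟫ • cr (cr x y) x - ⟪x, z⟫ • cr (cr x y) y := by
    apply vext <;> simp only [PiLp.sub_apply, PiLp.smul_apply, smul_eq_mul,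
      ← real_inner_self_eq_norm_sq, inner3, cr0, cr1, cr2] <;> ring
  rw [hx, hy, zero_smul, zero_smul, sub_zero] at e
  exact sub_eq_zero.1 e

def kfun (x y v : V) : V := (⟪cr x y, v⟫ / ‖cr x y‖ ^ 2) • cr x y

theorem mem_plane (x : S2) (v : V) : v ∈ plane x ↔ ⟪(x : V), v⟫ = 0 :=
  Submodule.mem_orthogonal_singleton_iff_inner_right

theorem Cker_eq (x y : S2) (h : cr x y ≠ 0) (v : V) : Cker x y v = kfun x y v := by
  have hn : ‖cr x y‖ ^ 2 ≠ 0 := pow_ne_zero _ (norm_ne_zero_iff.2 h)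
  change (((cline x y).orthogonalProjectionOnto v : cline x y) : V) = _
  have hm : kfun x y v ∈ cline x y := by
    refine Submodule.smul_mem _ _ ⟨?_, ?_⟩
    · exact (mem_plane _ _).2 (by rw [real_inner_comm]; exact cr_inner_left _ _)
    · exact (mem_plane _ _).2 (by rw [real_inner_comm]; exact cr_inner_right _ _)
  refine Submodule.eq_starProjection_of_mem_of_inner_eq_zero hm fun w hw => ?_
  have hs := cr_span x y w ((mem_plane _ _).1 hw.1) ((mem_plane _ _).1 hw.2)
  have : w = (⟪cr x y, w⟫ / ‖cr x y‖ ^ 2) • cr x y := by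
    rw [div_eq_inv_mul, mul_smul, ← hs, smul_smul, inv_mul_cancel₀ hn, one_smul]
  rw [this, inner_smul_right, inner_sub_left, kfun, inner_smul_left, real_inner_self_eq_norm_sq,
    real_inner_comm]
  simp [div_mul_cancel₀ _ hn, real_inner_comm]

theorem kfun_inner (x y v w : V) :
    ⟪kfun x y v, w⟫ = ⟪cr x y, v⟫ * ⟪cr x y, w⟫ / ‖cr x y‖ ^ 2 := by
  rw [kfun, inner_smul_left]; simp; ring

theorem kfun_swap (x y v w : V) : ⟪kfun x y v, w⟫ = ⟪kfun y x w, v⟫ := by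
  rw [kfun_inner, kfun_inner, cr_swap x y, inner_neg_left, inner_neg_left, norm_neg]; ring

theorem kfun_symm (x y v w : V) : ⟪kfun x y v, w⟫ = ⟪v, kfun x y w⟫ := by
  rw [kfun_inner, real_inner_comm _ v, kfun_inner]; ring

theorem kfun_norm_le (x y v : V) : ‖kfun x y v‖ ≤ ‖v‖ := by
  rw [kfun, norm_smul, Real.norm_eq_abs, abs_div, abs_of_nonneg (sq_nonneg ‖cr x y‖)]
  by_cases h : ‖cr x y‖ = 0
  · rw [h]; simp
  have := abs_real_inner_le_norm (cr x y) v
  rw [div_mul_eq_mul_div, div_le_iff₀ (by positivity)]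
  nlinarith [norm_nonneg (cr x y)]

theorem kfun_norm_sq (x y v : V) : ‖kfun x y v‖ ^ 2 = ⟪cr x y, v⟫ ^ 2 / ‖cr x y‖ ^ 2 := by
  rw [← real_inner_self_eq_norm_sq, kfun_inner]
  by_cases h : cr x y = 0
  · simp [h]
  have hn : ‖cr x y‖ ≠ 0 := norm_ne_zero_iff.2 h
  rw [kfun, inner_smul_right, real_inner_self_eq_norm_sq]; field_simp

theorem continuous_cr : Continuous fun p : V × V => cr p.1 p.2 := by
  unfold cr; fun_prop

theorem measurable_kfun : Measurable fun p : (V × V) × V => kfun p.1.1 p.1.2 p.2 := by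
  have h : Measurable fun p : (V × V) × V => cr p.1.1 p.1.2 :=
    (continuous_cr.comp continuous_fst).measurable
  unfold kfun
  exact ((h.inner measurable_snd).div (h.norm.pow_const 2)).smul h

section meas
abbrev RotInv (μ : Measure S2) : Prop := ∀ g : V ≃ₗᵢ[ℝ] V, MeasurePreserving (sphereMap g) μ μ

variable {μ : Measure S2}

theorem norm_S2 (x : S2) : ‖(x : V)‖ = 1 := mem_sphere_zero_iff_norm.1 x.2

def rfx (x y : V) : V ≃ₗᵢ[ℝ] V := (ℝ ∙ (x - y))ᗮ.reflection

theorem rfx_apply (x y : V) (h : ‖x‖ = ‖y‖) : rfx x y x = y :=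
  Submodule.reflection_sub h

theorem rfx_fix (x y z : V) (hx : ⟪x, z⟫ = 0) (hy : ⟪y, z⟫ = 0) : rfx x y z = z := by
  apply Submodule.reflection_mem_subspace_eq_self
  rw [Submodule.mem_orthogonal_singleton_iff_inner_right, inner_sub_left, hx, hy, sub_zero]

theorem sphereMap_homeo (g : V ≃ₗᵢ[ℝ] V) : Continuous (sphereMap g) := by
  unfold sphereMap
  exact Continuous.subtype_mk (g.continuous.comp continuous_subtype_val) _

theorem sphereMap_inj (g : V ≃ₗᵢ[ℝ] V) : Function.Injective (sphereMap g) := by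
  intro x y h
  exact Subtype.ext (g.injective (congrArg Subtype.val h))

theorem sphereMap_emb (g : V ≃ₗᵢ[ℝ] V) : MeasurableEmbedding (sphereMap g) :=
  ((sphereMap_homeo g).isClosedEmbedding (sphereMap_inj g)).measurableEmbedding

theorem integral_sphereMap (hμ : RotInv μ) {E : Type*} [NormedAddCommGroup E] [NormedSpace ℝ E]
    (g : V ≃ₗᵢ[ℝ] V) (F : S2 → E) : ∫ y, F (sphereMap g y) ∂μ = ∫ y, F y ∂μ :=
  (hμ g).integral_comp (sphereMap_emb g) F

theorem S2_infinite : Infinite S2 := by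
  have h1 : IsPreconnected (Metric.sphere (0 : V) 1) :=
    isPreconnected_sphere (by rw [rank_eq_card_basis (EuclideanSpace.basisFun (Fin 3) ℝ).toBasis]; simp) 0 1
  refine Set.infinite_coe_iff.2 (h1.infinite_of_nontrivial ?_)
  have hu : ‖(EuclideanSpace.single 0 1 : V)‖ = 1 := by simp
  refine ⟨EuclideanSpace.single 0 1, by simp, -EuclideanSpace.single 0 1, by simp, fun h => ?_⟩
  have := congrArg (fun w : V => w 0) h
  norm_num at this

theorem mu_singleton [IsProbabilityMeasure μ] (hμ : RotInv μ) (x : S2) : μ {x} = 0 := by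
  have hall : ∀ y, μ {y} = μ {x} := by
    intro y
    have h := (hμ (rfx x y)).measure_preimage (measurableSet_singleton y).nullMeasurableSet
    rw [← h]
    refine congrArg μ (Set.ext fun z => ?_)
    rw [Set.mem_preimage, Set.mem_singleton_iff, Set.mem_singleton_iff]
    have hx : sphereMap (rfx x y) x = y :=
      Subtype.ext (rfx_apply _ _ (by rw [norm_S2, norm_S2]))
    refine ⟨fun h => sphereMap_inj _ (h.trans hx.symm), fun h => ?_⟩
    rw [h]; exact hx
  by_contra h0
  have hinf := S2_infinite
  obtain ⟨n, hn⟩ := ENNReal.exists_nat_mul_gt h0 (ENNReal.one_ne_top)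
  obtain ⟨s, hs⟩ := Infinite.exists_subset_card_eq S2 n
  have h1 : μ (s : Set S2) = n * μ {x} := by
    rw [← MeasureTheory.sum_measure_singleton]
    simp [hall, hs]
  have h2 : μ (s : Set S2) ≤ 1 := prob_le_one
  rw [h1] at h2
  exact absurd hn (not_lt.2 h2)

theorem ae_cr_ne [IsProbabilityMeasure μ] (hμ : RotInv μ) (x : S2) : ∀ᵐ y : S2 ∂μ, cr x y ≠ 0 := by
  have h1 : ∀ᵐ y : S2 ∂μ, y ≠ x := by
    rw [ae_iff]; simpa using mu_singleton hμ x
  have h2 : ∀ᵐ y : S2 ∂μ, y ≠ (-x : S2) := by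
    rw [ae_iff]; simpa using mu_singleton hμ (-x : S2)
  filter_upwards [h1, h2] with y h1 h2 h
  have h3 := cr_norm_sq x y
  rw [h, norm_S2, norm_S2] at h3
  have h4 : (⟪(x : V), y⟫ - 1) * (⟪(x : V), y⟫ + 1) = 0 := by
    simp at h3; linarith
  rcases mul_eq_zero.1 h4 with h5 | h5
  · refine h1 (Subtype.ext ?_).symm
    exact (inner_eq_one_iff_of_norm_eq_one (𝕜 := ℝ) (norm_S2 x) (norm_S2 y)).1 (by linarith)
  · refine h2 (Subtype.ext ?_)
    have := (inner_eq_one_iff_of_norm_eq_one (𝕜 := ℝ) (x := -(x : V)) (y := (y : V)) (by rw [norm_neg, norm_S2]) (norm_S2 y)).1 (by rw [inner_neg_left]; linarith)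
    exact this.symm

theorem openPos [IsProbabilityMeasure μ] (hμ : RotInv μ) : μ.IsOpenPosMeasure := by
  constructor
  intro U hU hne h0
  obtain ⟨y, hy⟩ := hne
  have hc : (Set.univ : Set S2) ⊆ ⋃ x : S2, sphereMap (rfx x y) ⁻¹' U := by
    intro x _
    refine Set.mem_iUnion.2 ⟨x, ?_⟩
    have hx : sphereMap (rfx x y) x = y :=
      Subtype.ext (rfx_apply _ _ (by rw [norm_S2, norm_S2]))
    rw [Set.mem_preimage, hx]; exact hy
  obtain ⟨t, ht⟩ := isCompact_univ.elim_finite_subcover _ (fun x => hU.preimage (sphereMap_homeo _)) hc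
  have h1 : μ (⋃ x ∈ t, sphereMap (rfx x y) ⁻¹' U) = 0 := by
    refine (measure_biUnion_null_iff t.countable_toSet).2 ?_
    intro x _
    rw [(hμ _).measure_preimage hU.measurableSet.nullMeasurableSet, h0]
  have h2 := measure_mono_null ht h1
  simp at h2

end meas

section mom
variable {μ : Measure S2}

theorem inner_map (g : V ≃ₗᵢ[ℝ] V) (e e' : V) (h : g e = e') (y : S2) :
    ⟪e', (sphereMap g y : V)⟫ = ⟪e, (y : V)⟫ := by
  rw [← h]; exact g.inner_map_map _ _

theorem integral_odd (hμ : RotInv μ) (g : V ≃ₗᵢ[ℝ] V) (F : S2 → ℝ)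
    (h : ∀ y, F (sphereMap g y) = - F y) : ∫ y, F y ∂μ = 0 := by
  have := integral_sphereMap hμ g F
  simp only [h, integral_neg] at this
  linarith

theorem rot_moment (hμ : RotInv μ) (e1 e2 : V) (h1 : ‖e1‖ = 1) (h2 : ‖e2‖ = 1)
    (h12 : ⟪e1, e2⟫ = 0) (w : S2 → ℝ)
    (hw : ∀ g : V ≃ₗᵢ[ℝ] V, (∀ z, ⟪e1, z⟫ = 0 → ⟪e2, z⟫ = 0 → g z = z) →
      ∀ y, w (sphereMap g y) = w y) (N : ℕ)
    (hint : ∀ i j, i + j = 2 * N →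
      Integrable (fun y : S2 => w y * (⟪e1, (y : V)⟫ ^ i * ⟪e2, (y : V)⟫ ^ j)) μ) (j : ℕ) :
    ((2 * N).choose (2 * j) : ℝ) *
      ∫ y : S2, w y * (⟪e1, (y : V)⟫ ^ (2 * N - 2 * j) * ⟪e2, (y : V)⟫ ^ (2 * j)) ∂μ
      = (N.choose j : ℝ) * ∫ y : S2, w y * ⟪e1, (y : V)⟫ ^ (2 * N) ∂μ := by
  have hrot : ∀ t : ℝ, ∫ y : S2, w y * (⟪e1, (y : V)⟫ + t * ⟪e2, (y : V)⟫) ^ (2 * N) ∂μ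
      = (1 + t ^ 2) ^ N * ∫ y : S2, w y * ⟪e1, (y : V)⟫ ^ (2 * N) ∂μ := by
    intro t
    set s := Real.sqrt (1 + t ^ 2) with hs
    have hspos : 0 < s := Real.sqrt_pos.2 (by positivity)
    have hs2 : s ^ 2 = 1 + t ^ 2 := Real.sq_sqrt (by positivity)
    set e' : V := s⁻¹ • (e1 + t • e2) with he'
    have hn : ‖e1 + t • e2‖ = s := by
      rw [hs, eq_comm, Real.sqrt_eq_iff_mul_self_eq (by positivity) (norm_nonneg _), ← sq,
        norm_add_sq_real, norm_smul, inner_smul_right, h12, h1, h2]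
      simp
    have he1 : ‖e'‖ = 1 := by
      rw [he', norm_smul, hn, norm_inv, Real.norm_of_nonneg hspos.le, inv_mul_cancel₀ hspos.ne']
    have hg := rfx_apply e1 e' (by rw [h1, he1])
    have hfix : ∀ z, ⟪e1, z⟫ = 0 → ⟪e2, z⟫ = 0 → rfx e1 e' z = z := by
      intro z hz1 hz2
      refine rfx_fix _ _ _ hz1 ?_
      rw [he', inner_smul_left, inner_add_left, inner_smul_left, hz1, hz2]; simp
    have hi := integral_sphereMap hμ (rfx e1 e') (fun y => w y * ⟪e', (y : V)⟫ ^ (2 * N))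
    simp only [hw _ hfix, inner_map _ _ _ hg] at hi
    rw [hi, ← hs2, ← pow_mul, ← integral_const_mul]
    refine integral_congr_ae (Filter.Eventually.of_forall fun y => ?_)
    have : ⟪e1, (y : V)⟫ + t * ⟪e2, (y : V)⟫ = s * ⟪e', (y : V)⟫ := by
      rw [he', inner_smul_left, inner_add_left, inner_smul_left]
      simp [mul_inv_cancel_left₀ hspos.ne']
    simp only [this, mul_pow]; ring
  set W : ℕ → ℝ := fun i => ∫ y : S2, w y * (⟪e1, (y : V)⟫ ^ (2 * N - i) * ⟪e2, (y : V)⟫ ^ i) ∂μ with hW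
  have hexp : ∀ t : ℝ, ∫ y : S2, w y * (⟪e1, (y : V)⟫ + t * ⟪e2, (y : V)⟫) ^ (2 * N) ∂μ
      = ∑ i ∈ Finset.range (2 * N + 1), (((2 * N).choose i : ℝ) * W i) * t ^ i := by
    intro t
    have : ∀ y : S2, w y * (⟪e1, (y : V)⟫ + t * ⟪e2, (y : V)⟫) ^ (2 * N) =
        ∑ i ∈ Finset.range (2 * N + 1), (((2 * N).choose i : ℝ) * t ^ i) *
          (w y * (⟪e1, (y : V)⟫ ^ (2 * N - i) * ⟪e2, (y : V)⟫ ^ i)) := by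
      intro y
      rw [add_comm, add_pow, Finset.mul_sum]
      refine Finset.sum_congr rfl fun i _ => ?_
      rw [mul_pow]; ring
    simp only [this]
    rw [integral_finsetSum]
    · refine Finset.sum_congr rfl fun i _ => ?_
      rw [integral_const_mul]; simp only [hW]; ring
    · intro i hi
      have := Finset.mem_range.1 hi
      exact (hint _ _ (by omega)).const_mul _
  have hpoly : (∑ i ∈ Finset.range (2 * N + 1),
      Polynomial.C (((2 * N).choose i : ℝ) * W i) * Polynomial.X ^ i : Polynomial ℝ)
      = Polynomial.C (∫ y : S2, w y * ⟪e1, (y : V)⟫ ^ (2 * N) ∂μ) *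
        Polynomial.expand ℝ 2 ((1 + Polynomial.X) ^ N) := by
    apply Polynomial.funext
    intro t
    have := (hexp t).symm.trans (hrot t)
    simp only [Polynomial.eval_finsetSum, Polynomial.eval_mul, Polynomial.eval_C,
      Polynomial.eval_pow, Polynomial.eval_X, Polynomial.expand_eval, Polynomial.eval_add,
      Polynomial.eval_one]
    rw [this]; ring
  have hc := congrArg (fun p => Polynomial.coeff p (2 * j)) hpoly
  simp only [Polynomial.finsetSum_coeff, Polynomial.coeff_C_mul, Polynomial.coeff_X_pow,
    Polynomial.coeff_expand_mul' two_pos, Polynomial.coeff_one_add_X_pow] at hc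
  rw [mul_comm (N.choose j : ℝ), ← hc]
  rcases le_or_gt j N with hj | hj
  · simp [show 2 * j < 2 * N + 1 by omega, hW]
  · rw [Nat.choose_eq_zero_of_lt (by omega : 2 * N < 2 * j)]
    simp
    intro; omega

structure Frame (x e1 e2 : V) : Prop where
  hx : ‖x‖ = 1
  h1 : ‖e1‖ = 1
  hx1 : ⟪x, e1⟫ = 0
  he2 : e2 = cr x e1

theorem Frame.h12 {x e1 e2 : V} (h : Frame x e1 e2) : ⟪e1, e2⟫ = 0 := by
  rw [h.he2, real_inner_comm, cr_inner_right]

theorem Frame.hx2 {x e1 e2 : V} (h : Frame x e1 e2) : ⟪x, e2⟫ = 0 := by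
  rw [h.he2, real_inner_comm, cr_inner_left]

theorem Frame.h2sq {x e1 e2 : V} (h : Frame x e1 e2) : ‖e2‖ ^ 2 = 1 := by
  rw [h.he2, cr_norm_sq, h.hx, h.h1, h.hx1]; norm_num

theorem Frame.h2 {x e1 e2 : V} (h : Frame x e1 e2) : ‖e2‖ = 1 := by
  have := h.h2sq
  nlinarith [norm_nonneg e2]

theorem Frame.expand {x e1 e2 : V} (h : Frame x e1 e2) (y : V) :
    y = ⟪x, y⟫ • x + ⟪e1, y⟫ • e1 + ⟪e2, y⟫ • e2 := by
  have hxx : ⟪x, x⟫ = 1 := by rw [real_inner_self_eq_norm_sq, h.hx]; norm_num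
  have h11 : ⟪e1, e1⟫ = 1 := by rw [real_inner_self_eq_norm_sq, h.h1]; norm_num
  have h1x : ⟪e1, x⟫ = 0 := by rw [real_inner_comm, h.hx1]
  have h2x : ⟪e2, x⟫ = 0 := by rw [real_inner_comm, h.hx2]
  have h21 : ⟪e2, e1⟫ = 0 := by rw [real_inner_comm, h.h12]
  have := cr_span x e1 (y - ⟪x, y⟫ • x - ⟪e1, y⟫ • e1)
    (by simp only [inner_sub_right, inner_smul_right, hxx, h.hx1]; ring)
    (by simp only [inner_sub_right, inner_smul_right, h11, h1x]; ring)
  rw [← h.he2, h.h2sq, one_smul] at this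
  simp only [inner_sub_right, inner_smul_right, h2x, h21, mul_zero, sub_zero] at this
  rw [← this]; abel

theorem Frame.sum_sq {x e1 e2 : V} (h : Frame x e1 e2) (y : S2) :
    ⟪x, (y : V)⟫ ^ 2 + ⟪e1, (y : V)⟫ ^ 2 + ⟪e2, (y : V)⟫ ^ 2 = 1 := by
  have h1 : ⟪(y : V), (y : V)⟫ = 1 := by rw [real_inner_self_eq_norm_sq, norm_S2]; norm_num
  have h2 := congrArg (fun z => ⟪z, (y : V)⟫) (h.expand y)
  simp only [inner_add_left, inner_smul_left] at h2
  rw [h1] at h2; simp at h2; linarith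

theorem frame_exists (x a : V) (hx : ‖x‖ = 1) :
    ∃ e1 e2, Frame x e1 e2 ∧ a = ⟪x, a⟫ • x + ⟪e1, a⟫ • e1 := by
  have hxx : ⟪x, x⟫ = 1 := by rw [real_inner_self_eq_norm_sq, hx]; norm_num
  by_cases hb : a - ⟪x, a⟫ • x = 0
  · have : ∃ v, cr x v ≠ 0 := by
      by_contra! hc
      have h0 := cr_norm_sq x (EuclideanSpace.single 0 1)
      have h1 := cr_norm_sq x (EuclideanSpace.single 1 1)
      have h2 := cr_norm_sq x (EuclideanSpace.single 2 1)
      rw [hc, hx] at h0 h1 h2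
      rw [inner3] at hxx
      simp [inner3] at h0 h1 h2
      nlinarith
    obtain ⟨v, hv⟩ := this
    refine ⟨‖cr x v‖⁻¹ • cr x v, _, ⟨hx, ?_, ?_, rfl⟩, ?_⟩
    · rw [norm_smul, norm_inv, norm_norm, inv_mul_cancel₀ (norm_ne_zero_iff.2 hv)]
    · rw [inner_smul_right, real_inner_comm, cr_inner_left, mul_zero]
    · have ha := sub_eq_zero.1 hb
      have : ⟪‖cr x v‖⁻¹ • cr x v, a⟫ = 0 := by
        rw [ha, inner_smul_right, inner_smul_left, cr_inner_left]; simp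
      rw [this, zero_smul, add_zero]; exact ha
  · set b := a - ⟪x, a⟫ • x with hbd
    have hn := norm_ne_zero_iff.2 hb
    have hxb : ⟪x, b⟫ = 0 := by rw [hbd, inner_sub_right, inner_smul_right, hxx]; ring
    refine ⟨‖b‖⁻¹ • b, _, ⟨hx, ?_, ?_, rfl⟩, ?_⟩
    · rw [norm_smul, norm_inv, norm_norm, inv_mul_cancel₀ hn]
    · rw [inner_smul_right, hxb, mul_zero]
    · have ha : a = ⟪x, a⟫ • x + b := by rw [hbd]; abel
      have : ⟪b, a⟫ = ‖b‖ ^ 2 := by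
        have hbx : ⟪b, x⟫ = 0 := by rw [real_inner_comm]; exact hxb
        have h3 := congrArg (fun z => ⟪b, z⟫) ha
        simp only [inner_add_right, inner_smul_right, hbx, real_inner_self_eq_norm_sq] at h3
        rw [h3]; ring
      rw [inner_smul_left, this, smul_smul]
      simp only [map_inv₀, conj_trivial]
      rw [show ‖b‖⁻¹ * ‖b‖ ^ 2 * ‖b‖⁻¹ = 1 by field_simp, one_smul]
      exact ha
end mom

section mom2
variable {μ : Measure S2} [IsProbabilityMeasure μ]

theorem cont_int {E : Type*} [NormedAddCommGroup E] (F : S2 → E) (hF : Continuous F) :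
    Integrable F μ :=
  hF.integrable_of_hasCompactSupport (HasCompactSupport.of_compactSpace F)

theorem cont_inner (e : V) : Continuous fun y : S2 => ⟪e, (y : V)⟫ :=
  continuous_const.inner continuous_subtype_val

theorem mom1 (hμ : RotInv μ) {x e1 e2 : V} (h : Frame x e1 e2) (m : ℕ) :
    ∫ y : S2, ⟪x, (y : V)⟫ ^ (2 * m) ∂μ = 1 / (2 * m + 1) := by
  induction m with
  | zero => simp
  | succ m ih =>
    have c0 := cont_inner x
    have c1 := cont_inner e1
    have c2 := cont_inner e2
    have r1 := rot_moment hμ x e1 h.hx h.h1 h.hx1 (fun _ => 1) (fun _ _ _ => rfl) (m + 1)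
      (fun i j _ => cont_int _ (by fun_prop)) 1
    have r2 := rot_moment hμ x e2 h.hx h.h2 h.hx2 (fun _ => 1) (fun _ _ _ => rfl) (m + 1)
      (fun i j _ => cont_int _ (by fun_prop)) 1
    simp only [one_mul, Nat.choose_one_right, mul_one, show 2 * (m + 1) - 2 = 2 * m by omega]
      at r1 r2
    have hch : ((2 * (m + 1)).choose 2 : ℝ) = (m + 1) * (2 * m + 1) := by
      rw [Nat.cast_choose_two]; push_cast; ring
    rw [hch] at r1 r2
    have hs : ∫ y : S2, ⟪x, (y : V)⟫ ^ (2 * m) ∂μ = ∫ y : S2, ⟪x, (y : V)⟫ ^ (2 * (m + 1)) ∂μ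
        + ∫ y : S2, ⟪x, (y : V)⟫ ^ (2 * m) * ⟪e1, (y : V)⟫ ^ 2 ∂μ
        + ∫ y : S2, ⟪x, (y : V)⟫ ^ (2 * m) * ⟪e2, (y : V)⟫ ^ 2 ∂μ := by
      rw [← integral_add (cont_int _ (by fun_prop)) (cont_int _ (by fun_prop)),
        ← integral_add (cont_int _ (by fun_prop)) (cont_int _ (by fun_prop))]
      refine integral_congr_ae (Filter.Eventually.of_forall fun y => ?_)
      have := h.sum_sq y
      calc _ = ⟪x, (y : V)⟫ ^ (2 * m) * (⟪x, (y : V)⟫ ^ 2 + ⟪e1, (y : V)⟫ ^ 2 + ⟪e2, (y : V)⟫ ^ 2) := by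
            rw [this, mul_one]
        _ = _ := by ring
    rw [ih] at hs
    have hm : ((m : ℝ) + 1) ≠ 0 := by positivity
    have hm2 : (2 * (m : ℝ) + 1) ≠ 0 := by positivity
    push_cast at r1 r2 ⊢
    generalize (∫ y : S2, ⟪x, (y : V)⟫ ^ (2 * (m + 1)) ∂μ) = c at *
    generalize (∫ y : S2, ⟪x, (y : V)⟫ ^ (2 * m) * ⟪e1, (y : V)⟫ ^ 2 ∂μ) = p at *
    generalize (∫ y : S2, ⟪x, (y : V)⟫ ^ (2 * m) * ⟪e2, (y : V)⟫ ^ 2 ∂μ) = q at *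
    have hp : (2 * (m : ℝ) + 1) * p = c := by
      apply mul_left_cancel₀ hm; linarith
    have hq : (2 * (m : ℝ) + 1) * q = c := by
      apply mul_left_cancel₀ hm; linarith
    rw [eq_div_iff (by positivity)]
    rw [div_eq_iff hm2] at hs
    linarith

theorem mom2 (hμ : RotInv μ) {x e1 e2 : V} (h : Frame x e1 e2) (m j : ℕ) :
    ((2 * m).choose (2 * j) : ℝ) *
      ∫ y : S2, ⟪x, (y : V)⟫ ^ (2 * m - 2 * j) * ⟪e1, (y : V)⟫ ^ (2 * j) ∂μ
      = (m.choose j : ℝ) / (2 * m + 1) := by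
  have c0 := cont_inner x
  have c1 := cont_inner e1
  have r1 := rot_moment hμ x e1 h.hx h.h1 h.hx1 (fun _ => 1) (fun _ _ _ => rfl) m
      (fun i j _ => cont_int _ (by fun_prop)) j
  simp only [one_mul, mom1 hμ h] at r1
  rw [r1]; ring

theorem w_int {x e1 e2 : V} (h : Frame x e1 e2) (p i j : ℕ) (hij : 2 ≤ i + j) :
    Integrable (fun y : S2 => ⟪x, (y : V)⟫ ^ p / (1 - ⟪x, (y : V)⟫ ^ 2) *
      (⟪e1, (y : V)⟫ ^ i * ⟪e2, (y : V)⟫ ^ j)) μ := by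
  have c0 := (cont_inner x).measurable
  have c1 := (cont_inner e1).measurable
  have c2 := (cont_inner e2).measurable
  refine Integrable.of_bound (C := 1) (Measurable.aestronglyMeasurable (by fun_prop)) ?_
  refine Filter.Eventually.of_forall fun y => ?_
  have hs := h.sum_sq y
  generalize ⟪x, (y : V)⟫ = a at *
  generalize ⟪e1, (y : V)⟫ = b at *
  generalize ⟪e2, (y : V)⟫ = c at *
  rw [Real.norm_eq_abs, abs_mul, abs_div, abs_mul, abs_pow, abs_pow, abs_pow]
  have h0 : 0 ≤ 1 - a ^ 2 := by nlinarith
  rw [abs_of_nonneg h0]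
  rcases h0.eq_or_lt with h0 | h0
  · rw [← h0]; simp
  set r := Real.sqrt (1 - a ^ 2)
  have hr : r ^ 2 = 1 - a ^ 2 := Real.sq_sqrt h0.le
  have hr0 : 0 ≤ r := Real.sqrt_nonneg _
  have hr1 : r ≤ 1 := by nlinarith
  have ha : |a| ≤ 1 := by rw [abs_le_one_iff_mul_self_le_one]; nlinarith
  have hb : |b| ≤ r := by apply abs_le_of_sq_le_sq _ hr0; nlinarith
  have hc : |c| ≤ r := by apply abs_le_of_sq_le_sq _ hr0; nlinarith
  have h1 : |b| ^ i * |c| ^ j ≤ 1 - a ^ 2 := by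
    calc |b| ^ i * |c| ^ j ≤ r ^ i * r ^ j := by gcongr
      _ = r ^ (i + j) := by rw [pow_add]
      _ ≤ r ^ 2 := pow_le_pow_of_le_one hr0 hr1 hij
      _ = _ := hr
  have h2 : |a| ^ p ≤ 1 := pow_le_one₀ (abs_nonneg _) ha
  calc |a| ^ p / (1 - a ^ 2) * (|b| ^ i * |c| ^ j) ≤ 1 / (1 - a ^ 2) * (1 - a ^ 2) := by gcongr
    _ = 1 := by field_simp

theorem ae_rho (hμ : RotInv μ) (x : S2) : ∀ᵐ y : S2 ∂μ, 1 - ⟪(x : V), (y : V)⟫ ^ 2 ≠ 0 := by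
  filter_upwards [ae_cr_ne hμ x] with y hy h0
  apply hy
  have := cr_norm_sq (x : V) y
  rw [norm_S2, norm_S2] at this
  norm_num at this
  rw [h0] at this
  simpa using this

theorem momJ (hμ : RotInv μ) (x : S2) {e1 e2 : V} (h : Frame x e1 e2) (p j : ℕ) :
    ∫ y : S2, ⟪(x : V), (y : V)⟫ ^ p / (1 - ⟪(x : V), (y : V)⟫ ^ 2) *
      (⟪e1, (y : V)⟫ ^ (2 * j) * ⟪e2, (y : V)⟫ ^ 2) ∂μ
      = (∫ y : S2, ⟪(x : V), (y : V)⟫ ^ p * ⟪e1, (y : V)⟫ ^ (2 * j) ∂μ) / (2 * j + 2) := by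
  have hw : ∀ g : V ≃ₗᵢ[ℝ] V, (∀ z, ⟪e1, z⟫ = 0 → ⟪e2, z⟫ = 0 → g z = z) →
      ∀ y, (fun y : S2 => ⟪(x : V), (y : V)⟫ ^ p / (1 - ⟪(x : V), (y : V)⟫ ^ 2)) (sphereMap g y)
        = (fun y : S2 => ⟪(x : V), (y : V)⟫ ^ p / (1 - ⟪(x : V), (y : V)⟫ ^ 2)) y := by
    intro g hg y
    simp only [inner_map g x x (hg x (by rw [real_inner_comm]; exact h.hx1)
      (by rw [real_inner_comm]; exact h.hx2))]
  have r1 := rot_moment hμ e1 e2 h.h1 h.h2 h.h12 _ hw (j + 1)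
    (fun i k _ => w_int h p i k (by omega)) 1
  simp only [Nat.choose_one_right, mul_one, show 2 * (j + 1) - 2 = 2 * j by omega] at r1
  have hch : ((2 * (j + 1)).choose 2 : ℝ) = (j + 1) * (2 * j + 1) := by
    rw [Nat.cast_choose_two]; push_cast; ring
  rw [hch] at r1
  have hs : ∫ y : S2, ⟪(x : V), (y : V)⟫ ^ p * ⟪e1, (y : V)⟫ ^ (2 * j) ∂μ =
      ∫ y : S2, ⟪(x : V), (y : V)⟫ ^ p / (1 - ⟪(x : V), (y : V)⟫ ^ 2) * ⟪e1, (y : V)⟫ ^ (2 * (j + 1)) ∂μ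
      + ∫ y : S2, ⟪(x : V), (y : V)⟫ ^ p / (1 - ⟪(x : V), (y : V)⟫ ^ 2) *
      (⟪e1, (y : V)⟫ ^ (2 * j) * ⟪e2, (y : V)⟫ ^ 2) ∂μ := by
    rw [← integral_add (by simpa using w_int h p (2 * (j + 1)) 0 (by omega))
      (w_int h p _ _ (by omega))]
    refine integral_congr_ae ?_
    filter_upwards [ae_rho hμ x] with y hy
    have := h.sum_sq y
    have h3 : ⟪e1, (y : V)⟫ ^ 2 = 1 - ⟪(x : V), (y : V)⟫ ^ 2 - ⟪e2, (y : V)⟫ ^ 2 := by linarith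
    rw [mul_add, pow_add, mul_one, h3]
    field_simp; ring
  generalize (∫ y : S2, ⟪(x : V), (y : V)⟫ ^ p * ⟪e1, (y : V)⟫ ^ (2 * j) ∂μ) = A at *
  generalize (∫ y : S2, ⟪(x : V), (y : V)⟫ ^ p / (1 - ⟪(x : V), (y : V)⟫ ^ 2) * ⟪e1, (y : V)⟫ ^ (2 * (j + 1)) ∂μ) = B at *
  generalize (∫ y : S2, ⟪(x : V), (y : V)⟫ ^ p / (1 - ⟪(x : V), (y : V)⟫ ^ 2) *
      (⟪e1, (y : V)⟫ ^ (2 * j) * ⟪e2, (y : V)⟫ ^ 2) ∂μ) = J at *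
  rw [eq_div_iff (by positivity)]
  have : (2 * (j : ℝ) + 1) * J = B := by
    apply mul_left_cancel₀ (show ((j : ℝ) + 1) ≠ 0 by positivity)
    push_cast at r1; linarith
  linarith

theorem sum_even (f : ℕ → ℝ) (hf : ∀ j, f (2 * j + 1) = 0) (n : ℕ) :
    ∑ i ∈ Finset.range (2 * n), f i = ∑ j ∈ Finset.range n, f (2 * j) := by
  induction n with
  | zero => simp
  | succ n ih =>
    rw [show 2 * (n + 1) = 2 * n + 1 + 1 by ring, Finset.sum_range_succ, Finset.sum_range_succ, ih,
      Finset.sum_range_succ, hf, add_zero]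

theorem K_odd (hμ : RotInv μ) (x : S2) {e1 e2 : V} (h : Frame x e1 e2) (p j : ℕ) :
    ∫ y : S2, ⟪(x : V), (y : V)⟫ ^ p / (1 - ⟪(x : V), (y : V)⟫ ^ 2) *
      (⟪e1, (y : V)⟫ ^ (2 * j + 1) * ⟪e2, (y : V)⟫ ^ 2) ∂μ = 0 := by
  have g1 : rfx e1 (-e1) e1 = -e1 := rfx_apply _ _ (by rw [norm_neg])
  have hz : ∀ z, ⟪e1, z⟫ = 0 → rfx e1 (-e1) z = z := fun z hz =>
    rfx_fix _ _ _ hz (by rw [inner_neg_left, hz, neg_zero])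
  have gx := hz x (by rw [real_inner_comm]; exact h.hx1)
  have g2 := hz e2 h.h12
  refine integral_odd hμ (rfx e1 (-e1)) _ fun y => ?_
  have i1 := inner_map _ _ _ g1 y
  rw [inner_neg_left] at i1
  rw [inner_map _ _ _ gx, inner_map _ _ _ g2, ← i1, Odd.neg_pow ⟨j, rfl⟩]
  ring

theorem T_expand (hμ : RotInv μ) (x : S2) {e1 e2 : V} (h : Frame x e1 e2) (α β : ℝ) (l q : ℕ) :
    ∫ y : S2, (α * ⟪(x : V), (y : V)⟫ + β * ⟪e1, (y : V)⟫) ^ l * (⟪(x : V), (y : V)⟫ ^ q *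
      (⟪e2, (y : V)⟫ ^ 2 / (1 - ⟪(x : V), (y : V)⟫ ^ 2))) ∂μ =
    ∑ i ∈ Finset.range (l + 1), (l.choose i : ℝ) * α ^ (l - i) * β ^ i *
      ∫ y : S2, ⟪(x : V), (y : V)⟫ ^ (l - i + q) / (1 - ⟪(x : V), (y : V)⟫ ^ 2) *
      (⟪e1, (y : V)⟫ ^ i * ⟪e2, (y : V)⟫ ^ 2) ∂μ := by
  have : ∀ y : S2, (α * ⟪(x : V), (y : V)⟫ + β * ⟪e1, (y : V)⟫) ^ l * (⟪(x : V), (y : V)⟫ ^ q *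
      (⟪e2, (y : V)⟫ ^ 2 / (1 - ⟪(x : V), (y : V)⟫ ^ 2))) =
      ∑ i ∈ Finset.range (l + 1), (l.choose i : ℝ) * α ^ (l - i) * β ^ i *
      (⟪(x : V), (y : V)⟫ ^ (l - i + q) / (1 - ⟪(x : V), (y : V)⟫ ^ 2) *
      (⟪e1, (y : V)⟫ ^ i * ⟪e2, (y : V)⟫ ^ 2)) := by
    intro y
    rw [add_comm (α * _), add_pow, Finset.sum_mul]
    refine Finset.sum_congr rfl fun i _ => ?_
    rw [mul_pow, mul_pow, pow_add]; ring
  simp only [this]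
  rw [integral_finsetSum _ fun i _ => (w_int h _ _ _ (by omega)).const_mul _]
  simp only [integral_const_mul]

theorem T_odd (hμ : RotInv μ) (x : S2) {e1 e2 : V} (h : Frame x e1 e2) (α β : ℝ) (m : ℕ) :
    ∫ y : S2, (α * ⟪(x : V), (y : V)⟫ + β * ⟪e1, (y : V)⟫) ^ (2 * m) * (⟪(x : V), (y : V)⟫ ^ 0 *
      (⟪e2, (y : V)⟫ ^ 2 / (1 - ⟪(x : V), (y : V)⟫ ^ 2))) ∂μ =
    (1 : ℝ) / (2 * m + 1) * ∑ j ∈ Finset.range (m + 1), (m.choose j : ℝ) / (2 * j + 2) *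
      (α ^ 2) ^ (m - j) * (β ^ 2) ^ j := by
  rw [T_expand hμ x h]
  have := sum_even (fun i => ((2 * m).choose i : ℝ) * α ^ (2 * m - i) * β ^ i *
      ∫ y : S2, ⟪(x : V), (y : V)⟫ ^ (2 * m - i + 0) / (1 - ⟪(x : V), (y : V)⟫ ^ 2) *
      (⟪e1, (y : V)⟫ ^ i * ⟪e2, (y : V)⟫ ^ 2) ∂μ) (fun j => by rw [K_odd hμ x h, mul_zero]) (m + 1)
  rw [show 2 * (m + 1) = 2 * m + 1 + 1 by ring, Finset.sum_range_succ,
    Nat.choose_eq_zero_of_lt (by omega : 2 * m < 2 * m + 1)] at this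
  simp only [Nat.cast_zero, zero_mul, add_zero] at this
  simp only [add_zero]
  rw [this, Finset.mul_sum]
  refine Finset.sum_congr rfl fun j hj => ?_
  rw [momJ hμ x h]
  have h2 := mom2 hμ h m j
  rw [show 2 * m - 2 * j = 2 * (m - j) by omega] at h2 ⊢
  rw [pow_mul, pow_mul]
  linear_combination ((α ^ 2) ^ (m - j) * (β ^ 2) ^ j / (2 * j + 2)) * h2

theorem T_even (hμ : RotInv μ) (x : S2) {e1 e2 : V} (h : Frame x e1 e2) (α β : ℝ) (n : ℕ) :
    ∫ y : S2, (α * ⟪(x : V), (y : V)⟫ + β * ⟪e1, (y : V)⟫) ^ (2 * n + 1) * (⟪(x : V), (y : V)⟫ ^ 1 *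
      (⟪e2, (y : V)⟫ ^ 2 / (1 - ⟪(x : V), (y : V)⟫ ^ 2))) ∂μ =
    α / (2 * n + 3) * ∑ j ∈ Finset.range (n + 1), (n.choose j : ℝ) / (2 * j + 2) *
      (α ^ 2) ^ (n - j) * (β ^ 2) ^ j := by
  rw [T_expand hμ x h]
  have := sum_even (fun i => ((2 * n + 1).choose i : ℝ) * α ^ (2 * n + 1 - i) * β ^ i *
      ∫ y : S2, ⟪(x : V), (y : V)⟫ ^ (2 * n + 1 - i + 1) / (1 - ⟪(x : V), (y : V)⟫ ^ 2) *
      (⟪e1, (y : V)⟫ ^ i * ⟪e2, (y : V)⟫ ^ 2) ∂μ) (fun j => by rw [K_odd hμ x h, mul_zero]) (n + 1)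
  rw [show 2 * (n + 1) = 2 * n + 1 + 1 by ring] at this
  rw [this, Finset.mul_sum]
  refine Finset.sum_congr rfl fun j hj => ?_
  have hj' : j ≤ n := Nat.lt_succ_iff.1 (Finset.mem_range.1 hj)
  rw [momJ hμ x h]
  have h2 := mom2 hμ h (n + 1) j
  rw [show 2 * n + 1 - 2 * j + 1 = 2 * (n + 1) - 2 * j by omega,
    show 2 * n + 1 - 2 * j = 2 * (n - j) + 1 by omega]
  have c1 := Nat.choose_mul_succ_eq (2 * n + 1) (2 * j)
  have c2 := Nat.choose_mul_succ_eq n j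
  rw [show 2 * n + 1 + 1 - 2 * j = 2 * (n + 1 - j) by omega] at c1
  have c1' := congrArg (Nat.cast (R := ℝ)) c1
  have c2' := congrArg (Nat.cast (R := ℝ)) c2
  push_cast [Nat.cast_sub (show j ≤ n + 1 by omega)] at c1' c2' h2
  rw [show 2 * (n + 1) = 2 * n + 1 + 1 by ring] at h2 ⊢
  generalize (∫ y : S2, ⟪(x : V), (y : V)⟫ ^ (2 * n + 1 + 1 - 2 * j) * ⟪e1, (y : V)⟫ ^ (2 * j) ∂μ) = I at *
  have key : ((2 * n + 1).choose (2 * j) : ℝ) * I = (n.choose j : ℝ) / (2 * n + 3) := by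
    rw [eq_div_iff (by positivity)] at h2 ⊢
    apply mul_left_cancel₀ (show (2 * (n : ℝ) + 2) ≠ 0 by positivity)
    linear_combination (2 * (n + 1 - j : ℝ)) * h2 + I * (2 * n + 3) * c1' - 2 * c2'
  rw [pow_succ, pow_mul, pow_mul]
  linear_combination ((α ^ 2) ^ (n - j) * α * (β ^ 2) ^ j / (2 * j + 2)) * key

theorem lemS (A B : ℝ) (n : ℕ) :
    B * (2 * n + 2) * ∑ j ∈ Finset.range (n + 1), (n.choose j : ℝ) / (2 * j + 2) * A ^ (n - j) * B ^ j
      = (A + B) ^ (n + 1) - A ^ (n + 1) := by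
  rw [add_comm A B, add_pow, Finset.sum_range_succ' _ (n + 1)]
  simp only [pow_zero, Nat.sub_zero, one_mul, Nat.choose_zero_right, Nat.cast_one, mul_one,
    add_sub_cancel_right]
  rw [Finset.mul_sum]
  refine Finset.sum_congr rfl fun j hj => ?_
  have c := congrArg (Nat.cast (R := ℝ)) (Nat.add_one_mul_choose_eq n j)
  push_cast at c
  rw [show n + 1 - (j + 1) = n - j by omega]
  have : (2 * (j : ℝ) + 2) ≠ 0 := by positivity
  field_simp
  rw [pow_succ]
  linear_combination (B * A ^ (n - j) * B ^ j) * c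

theorem lemS' (A B : ℝ) (hB : B ≠ 0) (n : ℕ) :
    ∑ j ∈ Finset.range (n + 1), (n.choose j : ℝ) / (2 * j + 2) * A ^ (n - j) * B ^ j
      = 1 / (2 * n + 2) * ∑ i ∈ Finset.range (n + 1), (A + B) ^ (n - i) * A ^ i := by
  have h1 := lemS A B n
  have h2 := Commute.geom_sum₂_mul (Commute.all A (A + B)) (n + 1)
  have h3 : ∑ i ∈ Finset.range (n + 1), (A + B) ^ (n - i) * A ^ i =
    ∑ i ∈ Finset.range (n + 1), A ^ i * (A + B) ^ (n + 1 - 1 - i) :=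
    Finset.sum_congr rfl fun i _ => by rw [mul_comm]; rfl
  rw [h3]
  generalize ∑ i ∈ Finset.range (n + 1), A ^ i * (A + B) ^ (n + 1 - 1 - i) = G at *
  generalize ∑ j ∈ Finset.range (n + 1), (n.choose j : ℝ) / (2 * j + 2) * A ^ (n - j) * B ^ j = S at *
  apply mul_left_cancel₀ hB
  have : (2 * (n : ℝ) + 2) ≠ 0 := by positivity
  apply mul_left_cancel₀ this
  rw [show (2 * (n : ℝ) + 2) * (B * (1 / (2 * n + 2) * G)) = B * G by field_simp]
  linear_combination h1 + h2
end mom2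

section vec
variable {μ : Measure S2} [IsProbabilityMeasure μ]

theorem bdd_int (F G : S2 → ℝ) (hF : Continuous F) (hG : Integrable G μ) :
    Integrable (fun y => F y * G y) μ := by
  obtain ⟨c, hc⟩ := isCompact_univ.exists_bound_of_continuousOn (f := F) hF.continuousOn
  exact hG.bdd_mul hF.aestronglyMeasurable (Filter.Eventually.of_forall fun y => hc y trivial)

theorem cr_frame {x e1 e2 : V} (h : Frame x e1 e2) (y : V) :
    cr x y = ⟪e1, y⟫ • e2 - ⟪e2, y⟫ • e1 := by
  have h12 : cr x e2 = - e1 := by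
    have : cr x (cr x e1) = ⟪x, e1⟫ • x - ⟪x, x⟫ • e1 := by
      apply vext <;> simp only [PiLp.sub_apply, PiLp.smul_apply, smul_eq_mul, cr0, cr1, cr2, inner3] <;> ring
    rw [h.he2, this, h.hx1, real_inner_self_eq_norm_sq, h.hx]; simp
  have hl : cr x (⟪x, y⟫ • x + ⟪e1, y⟫ • e1 + ⟪e2, y⟫ • e2) =
      ⟪e1, y⟫ • cr x e1 + ⟪e2, y⟫ • cr x e2 := by
    generalize ⟪x, y⟫ = a
    generalize ⟪e1, y⟫ = b
    generalize ⟪e2, y⟫ = c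
    apply vext <;> simp only [PiLp.add_apply, PiLp.smul_apply, smul_eq_mul, cr0, cr1, cr2] <;> ring
  rw [← h.expand, h12, ← h.he2] at hl
  rw [hl, smul_neg, sub_eq_add_neg]

theorem cr_inner_cr (x y a : V) : ⟪cr x y, cr y a⟫ = ⟪x, y⟫ * ⟪y, a⟫ - ⟪x, a⟫ * ⟪y, y⟫ := by
  simp only [inner3, cr0, cr1, cr2]; ring

theorem vec_odd (hμ : RotInv μ) (x : S2) (a : V) (m : ℕ) :
    ∫ y : S2, Cker x y (⟪a, (y : V)⟫ ^ (2 * m) • (a - ⟪a, (y : V)⟫ • (y : V))) ∂μ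
      = (1 / ((2 * m + 1) * (2 * m + 2)) * ∑ i ∈ Finset.range (m + 1),
          (‖a‖ ^ 2) ^ (m - i) * (⟪(x : V), a⟫ ^ 2) ^ i) • (a - ⟪(x : V), a⟫ • (x : V)) := by
  obtain ⟨e1, e2, h, ha⟩ := frame_exists (x : V) a (norm_S2 x)
  set α := ⟪(x : V), a⟫ with hα
  set β := ⟪e1, a⟫ with hβ
  have hay : ∀ y : V, ⟪a, y⟫ = α * ⟪(x : V), y⟫ + β * ⟪e1, y⟫ := by
    intro y
    conv_lhs => rw [ha]
    rw [inner_add_left, inner_smul_left, inner_smul_left]; simp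
  have h2a : ⟪e2, a⟫ = 0 := by
    rw [real_inner_comm, hay, h.hx2, h.h12]; simp
  have hna : ‖a‖ ^ 2 = α ^ 2 + β ^ 2 := by
    rw [← real_inner_self_eq_norm_sq, hay]; ring
  have hv : a - α • (x : V) = β • e1 := by rw [sub_eq_iff_eq_add']; exact ha
  have c0 := cont_inner (x : V)
  have c1 := cont_inner e1
  have c2 := cont_inner e2
  have key : ∫ y : S2, Cker x y (⟪a, (y : V)⟫ ^ (2 * m) • (a - ⟪a, (y : V)⟫ • (y : V))) ∂μ =
      ∫ y : S2, ((α * ⟪(x : V), (y : V)⟫ + β * ⟪e1, (y : V)⟫) ^ (2 * m) * (⟪(x : V), (y : V)⟫ ^ 0 *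
      (⟪e2, (y : V)⟫ ^ 2 / (1 - ⟪(x : V), (y : V)⟫ ^ 2)))) • (β • e1)
      - ((α * ⟪(x : V), (y : V)⟫ + β * ⟪e1, (y : V)⟫) ^ (2 * m) *
        (⟪(x : V), (y : V)⟫ ^ 0 / (1 - ⟪(x : V), (y : V)⟫ ^ 2) *
          (⟪e1, (y : V)⟫ ^ 1 * ⟪e2, (y : V)⟫ ^ 1))) • (β • e2) ∂μ := by
    refine integral_congr_ae ?_
    filter_upwards [ae_cr_ne hμ x] with y hy
    rw [Cker_eq _ _ hy, kfun, cr_norm_sq, norm_S2, norm_S2, inner_smul_right, inner_sub_right,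
      inner_smul_right, cr_inner_right, cr_frame h, inner_sub_left, inner_smul_left,
      inner_smul_left, h2a, ← hβ, hay]
    simp only [conj_trivial, one_pow, one_mul]
    match_scalars <;> ring
  have i1 : Integrable (fun y : S2 => (α * ⟪(x : V), (y : V)⟫ + β * ⟪e1, (y : V)⟫) ^ (2 * m) *
      (⟪(x : V), (y : V)⟫ ^ 0 * (⟪e2, (y : V)⟫ ^ 2 / (1 - ⟪(x : V), (y : V)⟫ ^ 2)))) μ := by
    have := bdd_int (fun y : S2 => (α * ⟪(x : V), (y : V)⟫ + β * ⟪e1, (y : V)⟫) ^ (2 * m)) _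
      (by fun_prop) (w_int (μ := μ) h 0 0 2 (by omega))
    refine this.congr (Filter.Eventually.of_forall fun y => ?_)
    simp only []; ring
  have i2 := bdd_int (fun y : S2 => (α * ⟪(x : V), (y : V)⟫ + β * ⟪e1, (y : V)⟫) ^ (2 * m)) _
      (by fun_prop) (w_int (μ := μ) h 0 1 1 (by omega))
  have z2 : ∫ y : S2, ((α * ⟪(x : V), (y : V)⟫ + β * ⟪e1, (y : V)⟫) ^ (2 * m) *
        (⟪(x : V), (y : V)⟫ ^ 0 / (1 - ⟪(x : V), (y : V)⟫ ^ 2) *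
          (⟪e1, (y : V)⟫ ^ 1 * ⟪e2, (y : V)⟫ ^ 1))) ∂μ = 0 := by
    have hz : ∀ z, ⟪e2, z⟫ = 0 → rfx e2 (-e2) z = z := fun z hz =>
      rfx_fix _ _ _ hz (by rw [inner_neg_left, hz, neg_zero])
    refine integral_odd hμ (rfx e2 (-e2)) _ fun y => ?_
    have g := inner_map _ _ _ (rfx_apply e2 (-e2) (by rw [norm_neg])) y
    rw [inner_neg_left] at g
    rw [inner_map _ _ _ (hz x (by rw [real_inner_comm]; exact h.hx2)),
      inner_map _ _ _ (hz e1 (by rw [real_inner_comm]; exact h.h12)), ← g]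
    ring
  rw [key, integral_sub (i1.smul_const _) (i2.smul_const _), integral_smul_const,
    integral_smul_const, z2, zero_smul, sub_zero, T_odd hμ x h, hv]
  by_cases hβ0 : β = 0
  · rw [hβ0]; simp
  congr 1
  rw [lemS' _ _ (pow_ne_zero 2 hβ0), hna, ← mul_assoc]
  congr 1
  field_simp

theorem vec_even (hμ : RotInv μ) (x : S2) (a : V) (n : ℕ) :
    ∫ y : S2, Cker x y (⟪a, (y : V)⟫ ^ (2 * n + 1) • cr y a) ∂μ
      = (- (1 / ((2 * n + 2) * (2 * n + 3))) * ∑ i ∈ Finset.range (n + 1),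
          (‖a‖ ^ 2) ^ (n - i) * ((⟪(x : V), a⟫ ^ 2) ^ i * ⟪(x : V), a⟫)) • cr x a := by
  obtain ⟨e1, e2, h, ha⟩ := frame_exists (x : V) a (norm_S2 x)
  set α := ⟪(x : V), a⟫ with hα
  set β := ⟪e1, a⟫ with hβ
  have hay : ∀ y : V, ⟪a, y⟫ = α * ⟪(x : V), y⟫ + β * ⟪e1, y⟫ := by
    intro y
    conv_lhs => rw [ha]
    rw [inner_add_left, inner_smul_left, inner_smul_left]; simp
  have h2a : ⟪e2, a⟫ = 0 := by
    rw [real_inner_comm, hay, h.hx2, h.h12]; simp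
  have hna : ‖a‖ ^ 2 = α ^ 2 + β ^ 2 := by
    rw [← real_inner_self_eq_norm_sq, hay]; ring
  have hv : cr x a = β • e2 := by rw [cr_frame h, h2a, zero_smul, sub_zero]
  have c0 := cont_inner (x : V)
  have c1 := cont_inner e1
  have c2 := cont_inner e2
  set A : S2 → ℝ := fun y => (α * ⟪(x : V), (y : V)⟫ + β * ⟪e1, (y : V)⟫) ^ (2 * n + 1) with hA
  have cA : Continuous A := by fun_prop
  have key : ∫ y : S2, Cker x y (⟪a, (y : V)⟫ ^ (2 * n + 1) • cr y a) ∂μ =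
      ∫ y : S2, (A y * (β * ⟪(x : V), (y : V)⟫ - α * ⟪e1, (y : V)⟫)
      - β * (A y * (⟪(x : V), (y : V)⟫ ^ 1 *
      (⟪e2, (y : V)⟫ ^ 2 / (1 - ⟪(x : V), (y : V)⟫ ^ 2))))) • e2
      - (A y * (β * (⟪(x : V), (y : V)⟫ ^ 1 / (1 - ⟪(x : V), (y : V)⟫ ^ 2) *
          (⟪e1, (y : V)⟫ ^ 1 * ⟪e2, (y : V)⟫ ^ 1)) - α * ⟪e2, (y : V)⟫)) • e1 ∂μ := by
    refine integral_congr_ae ?_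
    filter_upwards [ae_cr_ne hμ x, ae_rho hμ x] with y hy hr
    have hyy : ⟪(y : V), (y : V)⟫ = 1 := by rw [real_inner_self_eq_norm_sq, norm_S2]; norm_num
    have hs := h.sum_sq y
    have e11 : ⟪e1, (y : V)⟫ ^ 2 = 1 - ⟪(x : V), (y : V)⟫ ^ 2 - ⟪e2, (y : V)⟫ ^ 2 := by linarith
    rw [Cker_eq _ _ hy, kfun, cr_norm_sq, norm_S2, norm_S2, inner_smul_right, cr_inner_cr, hyy,
      real_inner_comm a, hay, cr_frame h, ← hα]
    simp only [one_pow, one_mul, hA]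
    generalize (α * ⟪(x : V), (y : V)⟫ + β * ⟪e1, (y : V)⟫) ^ (2 * n + 1) = M
    generalize ⟪(x : V), (y : V)⟫ = y0 at *
    generalize ⟪e1, (y : V)⟫ = y1 at *
    generalize ⟪e2, (y : V)⟫ = y2 at *
    match_scalars
    · field_simp
      linear_combination (M * β * y0) * hs
    · field_simp
      ring
  have i0 : Integrable (fun y : S2 => A y * (β * ⟪(x : V), (y : V)⟫ - α * ⟪e1, (y : V)⟫)) μ :=
    cont_int _ (by fun_prop)
  have i1 : Integrable (fun y : S2 => A y *
      (⟪(x : V), (y : V)⟫ ^ 1 * (⟪e2, (y : V)⟫ ^ 2 / (1 - ⟪(x : V), (y : V)⟫ ^ 2)))) μ := by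
    have := bdd_int A _ cA (w_int (μ := μ) h 1 0 2 (by omega))
    refine this.congr (Filter.Eventually.of_forall fun y => ?_)
    simp only []; ring
  have i2 : Integrable (fun y : S2 => (A y * (β * (⟪(x : V), (y : V)⟫ ^ 1 / (1 - ⟪(x : V), (y : V)⟫ ^ 2) *
          (⟪e1, (y : V)⟫ ^ 1 * ⟪e2, (y : V)⟫ ^ 1)) - α * ⟪e2, (y : V)⟫))) μ :=
    bdd_int A _ cA (((w_int (μ := μ) h 1 1 1 (by omega)).const_mul β).sub (cont_int _ (by fun_prop)))
  have z2 : ∫ y : S2, (A y * (β * (⟪(x : V), (y : V)⟫ ^ 1 / (1 - ⟪(x : V), (y : V)⟫ ^ 2) *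
          (⟪e1, (y : V)⟫ ^ 1 * ⟪e2, (y : V)⟫ ^ 1)) - α * ⟪e2, (y : V)⟫)) ∂μ = 0 := by
    have hz : ∀ z, ⟪e2, z⟫ = 0 → rfx e2 (-e2) z = z := fun z hz =>
      rfx_fix _ _ _ hz (by rw [inner_neg_left, hz, neg_zero])
    refine integral_odd hμ (rfx e2 (-e2)) _ fun y => ?_
    have g := inner_map _ _ _ (rfx_apply e2 (-e2) (by rw [norm_neg])) y
    rw [inner_neg_left] at g
    simp only [hA]
    rw [inner_map _ _ _ (hz x (by rw [real_inner_comm]; exact h.hx2)),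
      inner_map _ _ _ (hz e1 (by rw [real_inner_comm]; exact h.h12)), ← g]
    ring
  have z0 : ∫ y : S2, A y * (β * ⟪(x : V), (y : V)⟫ - α * ⟪e1, (y : V)⟫) ∂μ = 0 := by
    set b : V := β • (x : V) - α • e1 with hb
    have hby : ∀ y : V, β * ⟪(x : V), y⟫ - α * ⟪e1, y⟫ = ⟪b, y⟫ := by
      intro y; rw [hb, inner_sub_left, inner_smul_left, inner_smul_left]; simp
    have hba : ⟪b, a⟫ = 0 := by rw [← hby]; ring
    have ga : rfx b (-b) a = a := rfx_fix _ _ _ hba (by rw [inner_neg_left, hba, neg_zero])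
    simp only [hA, hby, ← hay]
    refine integral_odd hμ (rfx b (-b)) _ fun y => ?_
    have g := inner_map _ _ _ (rfx_apply b (-b) (by rw [norm_neg])) y
    rw [inner_neg_left] at g
    rw [inner_map _ _ _ ga, ← g]
    ring
  have i3 : Integrable (fun y : S2 => A y * (β * ⟪(x : V), (y : V)⟫ - α * ⟪e1, (y : V)⟫)
      - β * (A y * (⟪(x : V), (y : V)⟫ ^ 1 *
      (⟪e2, (y : V)⟫ ^ 2 / (1 - ⟪(x : V), (y : V)⟫ ^ 2))))) μ := i0.sub (i1.const_mul β)
  rw [key, integral_sub (i3.smul_const _) (i2.smul_const _), integral_smul_const,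
    integral_smul_const, integral_sub i0 (i1.const_mul β), integral_const_mul, z2, z0,
    T_even hμ x h, hv]
  by_cases hβ0 : β = 0
  · rw [hβ0]; simp
  rw [zero_smul, sub_zero, zero_sub, smul_smul]
  congr 1
  rw [lemS' _ _ (pow_ne_zero 2 hβ0), hna]
  simp only [← mul_assoc]
  rw [← Finset.sum_mul]
  field_simp
end vec

section eig

def gr (f : Pol) (y : V) : V := WithLp.toLp 2 fun i => MvPolynomial.eval (y : V) (MvPolynomial.pderiv i f)

theorem gr_apply (f : Pol) (y : V) (i : Fin 3) :
    gr f y i = MvPolynomial.eval (y : V) (MvPolynomial.pderiv i f) := rfl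

theorem gr_add (f g : Pol) (y : V) : gr (f + g) y = gr f y + gr g y := by
  ext i; simp [gr_apply]

theorem gr_smul (c : ℝ) (f : Pol) (y : V) : gr (c • f) y = c • gr f y := by
  ext i; simp [gr_apply]

theorem continuous_gr (f : Pol) : Continuous (gr f) := by
  refine (PiLp.continuous_toLp 2 _).comp (continuous_pi fun i => ?_)
  exact (MvPolynomial.continuous_eval _).comp (PiLp.continuous_ofLp 2 _)

def Df (k : ℕ) (f : Pol) (y : S2) : V :=
  if Odd k then gr f y - ⟪(y : V), gr f y⟫ • (y : V) else cr y (gr f y)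

theorem cr_add (x y z : V) : cr x (y + z) = cr x y + cr x z := by
  apply vext <;> simp only [PiLp.add_apply, cr0, cr1, cr2] <;> ring

theorem cr_smul (c : ℝ) (x y : V) : cr x (c • y) = c • cr x y := by
  apply vext <;> simp only [PiLp.smul_apply, smul_eq_mul, cr0, cr1, cr2] <;> ring

theorem Df_add (k : ℕ) (f g : Pol) (y : S2) : Df k (f + g) y = Df k f y + Df k g y := by
  unfold Df; split_ifs
  · rw [gr_add, inner_add_right]; module
  · rw [gr_add, cr_add]

theorem Df_smul (k : ℕ) (c : ℝ) (f : Pol) (y : S2) : Df k (c • f) y = c • Df k f y := by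
  unfold Df; split_ifs
  · rw [gr_smul, inner_smul_right]; module
  · rw [gr_smul, cr_smul]

theorem continuous_Df (k : ℕ) (f : Pol) : Continuous (Df k f) := by
  have h1 : Continuous fun y : S2 => gr f y := (continuous_gr f).comp continuous_subtype_val
  have h2 : Continuous fun y : S2 => (y : V) := continuous_subtype_val
  unfold Df; split_ifs
  · have h3 : Continuous fun y : S2 => ⟪(y : V), gr f y⟫ := h2.inner h1
    fun_prop
  · exact continuous_cr.comp (h2.prodMk h1)

theorem Df_plane (k : ℕ) (f : Pol) (y : S2) : Df k f y ∈ plane y := by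
  rw [mem_plane]
  unfold Df; split_ifs
  · rw [inner_sub_right, inner_smul_right, real_inner_self_eq_norm_sq, norm_S2]; ring
  · rw [real_inner_comm, cr_inner_left]

theorem eval_lin (a y : V) : MvPolynomial.eval (y : V) (lin a) = ⟪a, y⟫ := by
  rw [inner3]
  simp [lin, Fin.sum_univ_three]

theorem gr_lin_pow (a y : V) (k : ℕ) : gr (lin a ^ k) y = ((k : ℝ) * ⟪a, y⟫ ^ (k - 1)) • a := by
  ext i
  rw [gr_apply, pderiv_lin_pow]
  simp [MvPolynomial.smul_eval, eval_lin]; ring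

variable {μ : Measure S2} [IsProbabilityMeasure μ]

theorem memLp_Df (k : ℕ) (f : Pol) : MemLp (Df k f) 2 μ :=
  (continuous_Df k f).memLp_of_hasCompactSupport (HasCompactSupport.of_compactSpace _)

def DH (μ : Measure S2) [IsProbabilityMeasure μ] (k : ℕ) : Pol →ₗ[ℝ] Hsub μ where
  toFun f := ⟨(memLp_Df k f).toLp, by
    change ∀ᵐ x ∂μ, _
    filter_upwards [(memLp_Df (μ := μ) k f).coeFn_toLp] with x hx
    rw [hx]; exact Df_plane k f x⟩
  map_add' f g := by
    apply Subtype.ext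
    change _ = (memLp_Df k f).toLp + (memLp_Df k g).toLp
    rw [← MemLp.toLp_add]
    exact MemLp.toLp_congr (memLp_Df k (f + g)) _ (Filter.Eventually.of_forall fun y => Df_add k f g y)
  map_smul' c f := by
    apply Subtype.ext
    change _ = c • (memLp_Df k f).toLp
    rw [← MemLp.toLp_const_smul]
    exact MemLp.toLp_congr (memLp_Df k (c • f)) _ (Filter.Eventually.of_forall fun y => Df_smul k c f y)

theorem DH_ae (k : ℕ) (f : Pol) : ((DH μ k f : Lp V 2 μ) : S2 → V) =ᵐ[μ] Df k f :=
  (memLp_Df k f).coeFn_toLp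

theorem DH_inj (hμ : RotInv μ) (k : ℕ) (hk : 1 ≤ k) (f : Pol) (hf : f ∈ Harm k) (h : DH μ k f = 0) :
    f = 0 := by
  have := openPos hμ
  have h0 : Df k f = fun _ => 0 := by
    rw [← Continuous.ae_eq_iff_eq μ (continuous_Df k f) continuous_const]
    have h1 := DH_ae (μ := μ) k f
    rw [h] at h1
    exact h1.symm.trans (Lp.coeFn_zero V 2 μ)
  apply harm_inj k hk f hf
  intro y i
  have hy := congrFun h0 y
  have h1 : gr f y = ⟪(y : V), gr f y⟫ • (y : V) := by
    unfold Df at hy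
    split_ifs at hy
    · exact sub_eq_zero.1 hy
    · have e : cr (cr (y : V) (gr f y)) y = ⟪(y : V), (y : V)⟫ • gr f y - ⟪(y : V), gr f y⟫ • (y : V) := by
        apply vext <;> simp only [PiLp.sub_apply, PiLp.smul_apply, smul_eq_mul, cr0, cr1, cr2, inner3] <;> ring
      rw [hy, real_inner_self_eq_norm_sq, norm_S2] at e
      have z : cr (0 : V) y = 0 := by apply vext <;> simp [cr0, cr1, cr2]
      rw [z] at e
      simp at e
      exact (sub_eq_zero.1 e.symm)
  have h2 : ⟪(y : V), gr f y⟫ = k * MvPolynomial.eval (y : V) f := by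
    have hh : f.IsHomogeneous k := hf.1
    have := congrArg (MvPolynomial.eval (y : V)) hh.sum_X_mul_pderiv
    simp [Fin.sum_univ_three] at this
    rw [inner3, gr_apply, gr_apply, gr_apply, this]
  rw [← gr_apply, h1, h2]; simp

def lamn (k : ℕ) : ℝ := (-1 : ℝ) ^ (k - 1) / (k * (k + 1))

theorem iter_lap' (k : ℕ) : ∃ C : ℕ → ℝ, C 0 = 1 ∧ ∀ j, 2 * j ≤ k → 0 < C j ∧
    ∀ a : V, (lap ^ j) (lin a ^ k) = (C j * (‖a‖ ^ 2) ^ j) • lin a ^ (k - 2 * j) := by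
  choose c hc using fun j k => iter_lap_lin_pow j k
  refine ⟨fun j => if j = 0 then 1 else c j (k - 2 * j), by simp, fun j hj => ?_⟩
  by_cases h : j = 0
  · subst h; simp
  · obtain ⟨h1, h2⟩ := hc j (k - 2 * j)
    rw [Nat.sub_add_cancel hj] at h2
    simpa [h] using ⟨h1, h2⟩

theorem Df_lin_odd (a : V) (m m' : ℕ) (y : S2) : Df (2 * m + 1) (lin a ^ (2 * m' + 1)) y =
    (2 * m' + 1 : ℝ) • (⟪a, (y : V)⟫ ^ (2 * m') • (a - ⟪a, (y : V)⟫ • (y : V))) := by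
  rw [Df, if_pos ⟨m, rfl⟩, gr_lin_pow, inner_smul_right, real_inner_comm]
  push_cast
  module

theorem Df_lin_even (a : V) (m m' : ℕ) (y : S2) : Df (2 * m + 2) (lin a ^ (2 * m' + 2)) y =
    (2 * m' + 2 : ℝ) • (⟪a, (y : V)⟫ ^ (2 * m' + 1) • cr y a) := by
  rw [Df, if_neg (by simp [parity_simps]), gr_lin_pow, cr_smul, smul_smul]
  push_cast
  rfl

theorem int_odd (hμ : RotInv μ) (x : S2) (m : ℕ) (C : ℕ → ℝ)
    (hC : ∀ j, 2 * j ≤ 2 * m + 1 → 0 < C j ∧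
    ∀ a : V, (lap ^ j) (lin a ^ (2 * m + 1)) = (C j * (‖a‖ ^ 2) ^ j) • lin a ^ (2 * m + 1 - 2 * j)) (a : V) :
    ∫ y, Cker x y (Df (2 * m + 1) (lin a ^ (2 * m + 1)) y) ∂μ =
      ∑ j ∈ Finset.range (m + 1), (lamn (2 * m + 1) * (2 * m + 1) / (C j * (2 * (m - j : ℕ) + 1))) •
        Df (2 * m + 1) ((lap ^ j) (lin a ^ (2 * m + 1))) x := by
  simp only [Df_lin_odd, map_smul, integral_smul]
  have := vec_odd hμ x a m
  simp only [map_smul] at this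
  rw [this, Finset.mul_sum, Finset.sum_smul, Finset.smul_sum, ← Finset.sum_range_reflect]
  refine Finset.sum_congr rfl fun j hj => ?_
  have hj' : j ≤ m := Nat.lt_succ_iff.1 (Finset.mem_range.1 hj)
  obtain ⟨h1, h2⟩ := hC j (by omega)
  rw [h2, Df_smul, show 2 * m + 1 - 2 * j = 2 * (m - j) + 1 by omega, Df_lin_odd,
    real_inner_comm, lamn, show m - (m + 1 - 1 - j) = j by omega, show m + 1 - 1 - j = m - j by omega,
    ← pow_mul]
  simp only [smul_smul]
  congr 1
  push_cast
  rw [pow_mul (-1 : ℝ), neg_one_sq, one_pow]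
  field_simp
  ring

theorem int_even (hμ : RotInv μ) (x : S2) (m : ℕ) (C : ℕ → ℝ)
    (hC : ∀ j, 2 * j ≤ 2 * m + 2 → 0 < C j ∧
    ∀ a : V, (lap ^ j) (lin a ^ (2 * m + 2)) = (C j * (‖a‖ ^ 2) ^ j) • lin a ^ (2 * m + 2 - 2 * j)) (a : V) :
    ∫ y, Cker x y (Df (2 * m + 2) (lin a ^ (2 * m + 2)) y) ∂μ =
      ∑ j ∈ Finset.range (m + 1), (lamn (2 * m + 2) * (2 * m + 2) / (C j * (2 * (m - j : ℕ) + 2))) •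
        Df (2 * m + 2) ((lap ^ j) (lin a ^ (2 * m + 2))) x := by
  simp only [Df_lin_even, map_smul, integral_smul]
  have := vec_even hμ x a m
  simp only [map_smul] at this
  rw [this, Finset.mul_sum, Finset.sum_smul, Finset.smul_sum, ← Finset.sum_range_reflect]
  refine Finset.sum_congr rfl fun j hj => ?_
  have hj' : j ≤ m := Nat.lt_succ_iff.1 (Finset.mem_range.1 hj)
  obtain ⟨h1, h2⟩ := hC j (by omega)
  rw [h2, Df_smul, show 2 * m + 2 - 2 * j = 2 * (m - j) + 2 by omega, Df_lin_even,
    real_inner_comm, lamn, show m - (m + 1 - 1 - j) = j by omega, show m + 1 - 1 - j = m - j by omega,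
    ← pow_mul]
  simp only [smul_smul]
  congr 1
  push_cast
  rw [pow_succ (-1 : ℝ), pow_mul (-1 : ℝ), neg_one_sq, one_pow]
  field_simp
  ring

theorem C_lin (hμ : RotInv μ) (k : ℕ) (hk : 1 ≤ k) : ∃ (N : ℕ) (c : ℕ → ℝ), c 0 = lamn k ∧
    ∀ (x : S2) (a : V), ∫ y, Cker x y (Df k (lin a ^ k) y) ∂μ =
      ∑ j ∈ Finset.range (N + 1), c j • Df k ((lap ^ j) (lin a ^ k)) x := by
  obtain ⟨C, hC0, hC⟩ := iter_lap' k
  rcases Nat.even_or_odd' k with ⟨m, rfl | rfl⟩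
  · obtain ⟨n, rfl⟩ : ∃ n, m = n + 1 := ⟨m - 1, by omega⟩
    rw [mul_add, mul_one] at *
    refine ⟨n, fun j => lamn (2 * n + 2) * (2 * n + 2) / (C j * (2 * (n - j : ℕ) + 2)), ?_,
      fun x a => int_even hμ x n C hC a⟩
    simp only [hC0, Nat.sub_zero]; field_simp
  · refine ⟨m, fun j => lamn (2 * m + 1) * (2 * m + 1) / (C j * (2 * (m - j : ℕ) + 1)), ?_,
      fun x a => int_odd hμ x m C hC a⟩
    simp only [hC0, Nat.sub_zero]; field_simp

abbrev IsC (Cop : Hsub μ →L[ℝ] Hsub μ) : Prop := ∀ s : Hsub μ, ∀ᵐ x ∂μ,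
      ((Cop s : Lp V 2 μ) : S2 → V) x = ∫ y, Cker x y (((s : Lp V 2 μ) : S2 → V) y) ∂μ

theorem C_DH (hμ : RotInv μ) (Cop : Hsub μ →L[ℝ] Hsub μ) (hC : IsC Cop) (k : ℕ) (hk : 1 ≤ k) :
    ∃ (N : ℕ) (c : ℕ → ℝ), c 0 = lamn k ∧
    ∀ f : Pol, f.IsHomogeneous k → Cop (DH μ k f) =
      ∑ j ∈ Finset.range (N + 1), c j • DH μ k ((lap ^ j) f) := by
  obtain ⟨N, c, h0, h⟩ := C_lin hμ k hk
  refine ⟨N, c, h0, fun f hf => ?_⟩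
  let T : Pol →ₗ[ℝ] Hsub μ := ∑ j ∈ Finset.range (N + 1), c j • (DH μ k ∘ₗ (lap ^ j))
  have hT : ∀ g, T g = ∑ j ∈ Finset.range (N + 1), c j • DH μ k ((lap ^ j) g) := by
    intro g; simp [T, LinearMap.sum_apply]
  rw [← hT]
  change (Cop.toLinearMap ∘ₗ DH μ k) f = T f
  refine LinearMap.eqOn_span ?_ (span_lin_pow k f hf)
  rintro _ ⟨a, rfl⟩
  change Cop (DH μ k (lin a ^ k)) = T (lin a ^ k)
  have : T (lin a ^ k) = DH μ k (∑ j ∈ Finset.range (N + 1), c j • (lap ^ j) (lin a ^ k)) := by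
    rw [hT, map_sum]; simp
  rw [this]
  apply Subtype.ext
  apply Lp.ext
  filter_upwards [hC (DH μ k (lin a ^ k)), DH_ae (μ := μ) k (∑ j ∈ Finset.range (N + 1), c j • (lap ^ j) (lin a ^ k))] with x h1 h2
  rw [h1, h2]
  have h3 : ∫ y, Cker x y (((DH μ k (lin a ^ k) : Lp V 2 μ) : S2 → V) y) ∂μ =
      ∫ y, Cker x y (Df k (lin a ^ k) y) ∂μ := by
    refine integral_congr_ae ?_
    filter_upwards [DH_ae (μ := μ) k (lin a ^ k)] with y hy
    rw [hy]
  rw [h3, h]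
  generalize Finset.range (N + 1) = s
  induction s using Finset.induction_on with
  | empty =>
    have := Df_smul k 0 0 x
    simp at this
    simp [this]
  | insert i s hi ih => rw [Finset.sum_insert hi, Finset.sum_insert hi, Df_add, Df_smul, ih]

theorem C_harm (hμ : RotInv μ) (Cop : Hsub μ →L[ℝ] Hsub μ) (hC : IsC Cop) (k : ℕ) (hk : 1 ≤ k)
    (f : Pol) (hf : f ∈ Harm k) : Cop (DH μ k f) = lamn k • DH μ k f := by
  obtain ⟨N, c, h0, h⟩ := C_DH hμ Cop hC k hk
  rw [h f hf.1, Finset.sum_range_succ', Finset.sum_eq_zero, zero_add, h0, pow_zero]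
  · rfl
  · intro j _
    have : lap f = 0 := hf.2
    rw [pow_succ, Module.End.mul_apply, this, map_zero, map_zero, smul_zero]

theorem onb_exists {E F : Type*} [NormedAddCommGroup E] [InnerProductSpace ℝ E] [AddCommGroup F]
    [Module ℝ F] [Module.Finite ℝ F] (T : F →ₗ[ℝ] E) (hT : Function.Injective T) (n : ℕ)
    (hn : n ≤ Module.finrank ℝ F) :
    ∃ v : Fin n → E, Orthonormal ℝ v ∧ ∀ i, ∃ f, T f = v i := by
  have hle : n ≤ Module.finrank ℝ (LinearMap.range T) :=
    (LinearMap.finrank_range_of_inj hT).symm ▸ hn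
  let b := stdOrthonormalBasis ℝ (LinearMap.range T)
  have h1 := b.orthonormal.comp_linearIsometry (LinearMap.range T).subtypeₗᵢ
  refine ⟨_, h1.comp _ (Fin.castLE_injective hle), fun i => ?_⟩
  exact (b (Fin.castLE hle i)).2

theorem eig_family (hμ : RotInv μ) (Cop : Hsub μ →L[ℝ] Hsub μ) (hC : IsC Cop) (k : ℕ) (hk : 1 ≤ k) :
    ∃ v : Fin (2 * k + 1) → Hsub μ, Orthonormal ℝ v ∧ ∀ i, Cop (v i) = lamn k • v i := by
  obtain ⟨v, h1, h2⟩ := onb_exists ((DH μ k).domRestrict (Harm k)) (by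
    rw [injective_iff_map_eq_zero]
    intro f hf
    exact Subtype.ext (DH_inj hμ k hk f f.2 hf)) _ (finrank_harm k hk)
  refine ⟨v, h1, fun i => ?_⟩
  obtain ⟨f, hf⟩ := h2 i
  rw [← hf]
  exact C_harm hμ Cop hC k hk f f.2
end eig

section hs
variable {μ : Measure S2} [IsProbabilityMeasure μ]

theorem meas_f (f : Lp V 2 μ) : Measurable (f : S2 → V) := (Lp.stronglyMeasurable f).measurable

theorem int_f (f : Lp V 2 μ) : Integrable (f : S2 → V) μ :=
  (Lp.memLp f).integrable (by norm_num)

theorem meas_k2 (f : S2 → V) (hf : Measurable f) :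
    Measurable fun p : S2 × S2 => kfun p.1 p.2 (f p.2) := by
  have h1 : Measurable fun p : S2 × S2 => (p.1 : V) := measurable_subtype_coe.comp measurable_fst
  have h2 : Measurable fun p : S2 × S2 => (p.2 : V) := measurable_subtype_coe.comp measurable_snd
  have h3 : Measurable fun p : S2 × S2 => f p.2 := hf.comp measurable_snd
  have h4 : Measurable fun p : S2 × S2 => (((p.1 : V), (p.2 : V)), f p.2) := (h1.prodMk h2).prodMk h3
  have h5 := measurable_kfun.comp h4
  exact h5

theorem meas_k1 (x : S2) (f : S2 → V) (hf : Measurable f) :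
    Measurable fun y : S2 => kfun x y (f y) := by
  have h1 : Measurable fun y : S2 => (x, y) := measurable_const.prodMk measurable_id
  have h2 := (meas_k2 f hf).comp h1
  exact h2

theorem int_k (x : S2) (f : Lp V 2 μ) : Integrable (fun y : S2 => kfun x y (f y)) μ :=
  (int_f f).mono (meas_k1 x f (meas_f f)).aestronglyMeasurable
    (Filter.Eventually.of_forall fun _ => kfun_norm_le _ _ _)

theorem C_k (hμ : RotInv μ) (Cop : Hsub μ →L[ℝ] Hsub μ) (hC : IsC Cop) (f : Hsub μ) :
    ∀ᵐ x ∂μ, ((Cop f : Lp V 2 μ) : S2 → V) x = ∫ y : S2, kfun x y ((f : Lp V 2 μ) y) ∂μ := by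
  filter_upwards [hC f] with x hx
  rw [hx]
  refine integral_congr_ae ?_
  filter_upwards [ae_cr_ne hμ x] with y hy
  exact Cker_eq x y hy _

theorem C_inner (hμ : RotInv μ) (Cop : Hsub μ →L[ℝ] Hsub μ) (hC : IsC Cop) (f g : Hsub μ) :
    ⟪Cop f, g⟫ = ∫ x : S2, ∫ y : S2, ⟪kfun x y ((f : Lp V 2 μ) y), (g : Lp V 2 μ) x⟫ ∂μ ∂μ := by
  change ⟪((Cop f : Hsub μ) : Lp V 2 μ), (g : Lp V 2 μ)⟫ = _
  rw [L2.inner_def]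
  refine integral_congr_ae ?_
  filter_upwards [C_k hμ Cop hC f] with x hx
  rw [hx, real_inner_comm, ← integral_inner (int_k x _)]
  refine integral_congr_ae (Filter.Eventually.of_forall fun y => ?_)
  exact real_inner_comm _ _

theorem C_symm (hμ : RotInv μ) (Cop : Hsub μ →L[ℝ] Hsub μ) (hC : IsC Cop) (f g : Hsub μ) :
    ⟪Cop f, g⟫ = ⟪f, Cop g⟫ := by
  rw [real_inner_comm (Cop g) f, C_inner hμ Cop hC f g, C_inner hμ Cop hC g f, integral_integral_swap]
  · refine integral_congr_ae (Filter.Eventually.of_forall fun y => ?_)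
    refine integral_congr_ae (Filter.Eventually.of_forall fun x => ?_)
    exact kfun_swap _ _ _ _
  · have h1 : Integrable (fun p : S2 × S2 => ‖(g : Lp V 2 μ) p.1‖ * ‖(f : Lp V 2 μ) p.2‖) (μ.prod μ) :=
      (int_f (g : Lp V 2 μ)).norm.mul_prod (int_f (f : Lp V 2 μ)).norm
    refine h1.mono ?_ (Filter.Eventually.of_forall fun p => ?_)
    · exact ((meas_k2 _ (meas_f (f : Lp V 2 μ))).inner
        ((meas_f (g : Lp V 2 μ)).comp measurable_fst)).aestronglyMeasurable
    · simp only [Function.uncurry]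
      refine (norm_inner_le_norm _ _).trans ?_
      rw [Real.norm_of_nonneg (by positivity), mul_comm]
      gcongr
      exact kfun_norm_le _ _ _

theorem memLp_K (x : S2) (w : V) : MemLp (fun y : S2 => kfun x y w) 2 μ :=
  MemLp.of_bound (meas_k1 x (fun _ => w) measurable_const).aestronglyMeasurable ‖w‖
    (Filter.Eventually.of_forall fun _ => kfun_norm_le _ _ _)

theorem hs_pt {ι : Type*} [Fintype ι] (x : S2) (e : ι → Lp V 2 μ) (he : Orthonormal ℝ e) :
    ∑ i, ‖∫ y : S2, kfun x y (e i y) ∂μ‖ ^ 2 ≤ 1 := by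
  let b := EuclideanSpace.basisFun (Fin 3) ℝ
  let K : Fin 3 → Lp V 2 μ := fun w => (memLp_K (μ := μ) x (b w)).toLp _
  have h1 : ∀ i, ‖∫ y : S2, kfun x y (e i y) ∂μ‖ ^ 2 = ∑ w, ‖⟪e i, K w⟫‖ ^ 2 := by
    intro i
    rw [← b.sum_sq_norm_inner_right]
    refine Finset.sum_congr rfl fun w _ => ?_
    congr 2
    rw [← integral_inner (int_k x _), L2.inner_def]
    refine integral_congr_ae ?_
    filter_upwards [(memLp_K (μ := μ) x (b w)).coeFn_toLp] with y hy
    simp only [K]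
    rw [hy, real_inner_comm, kfun_symm]
  have h2 : ∀ w, ‖K w‖ ^ 2 = ∫ y : S2, ‖kfun x y (b w)‖ ^ 2 ∂μ := by
    intro w
    rw [← real_inner_self_eq_norm_sq, L2.inner_def]
    refine integral_congr_ae ?_
    filter_upwards [(memLp_K (μ := μ) x (b w)).coeFn_toLp] with y hy
    simp only [K]
    rw [hy, real_inner_self_eq_norm_sq]
  simp_rw [h1]
  rw [Finset.sum_comm]
  calc _ ≤ ∑ w, ‖K w‖ ^ 2 := Finset.sum_le_sum fun w _ => he.sum_inner_products_le _
    _ = ∫ y : S2, ∑ w, ‖kfun x y (b w)‖ ^ 2 ∂μ := by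
      rw [integral_finsetSum]
      · exact Finset.sum_congr rfl fun w _ => h2 w
      · intro w _
        exact (memLp_K (μ := μ) x (b w)).integrable_norm_pow (by norm_num)
    _ ≤ ∫ y : S2, (1 : ℝ) ∂μ := by
      refine integral_mono ?_ (integrable_const _) ?_
      · exact integrable_finsetSum _ fun w _ =>
          (memLp_K (μ := μ) x (b w)).integrable_norm_pow (by norm_num)
      · intro y
        simp only [kfun_norm_sq]
        rw [← Finset.sum_div]
        have : ∑ w, ⟪cr x y, b w⟫ ^ 2 = ‖cr x y‖ ^ 2 := by
          rw [← b.sum_sq_norm_inner_left]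
          simp
        rw [this]
        exact div_self_le_one _
    _ = 1 := by simp

theorem hs_bound (hμ : RotInv μ) (Cop : Hsub μ →L[ℝ] Hsub μ) (hC : IsC Cop)
    {ι : Type} [Fintype ι] (e : ι → Hsub μ) (he : Orthonormal ℝ e) :
    ∑ i, ‖Cop (e i)‖ ^ 2 ≤ 1 := by
  have he' : Orthonormal ℝ fun i => (e i : Lp V 2 μ) := he.comp_linearIsometry (Hsub μ).subtypeₗᵢ
  have h1 : ∀ i, ‖Cop (e i)‖ ^ 2 = ∫ x : S2, ‖((Cop (e i) : Lp V 2 μ) : S2 → V) x‖ ^ 2 ∂μ := by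
    intro i
    rw [← real_inner_self_eq_norm_sq]
    change ⟪((Cop (e i) : Hsub μ) : Lp V 2 μ), ((Cop (e i) : Hsub μ) : Lp V 2 μ)⟫ = _
    rw [L2.inner_def]
    simp_rw [real_inner_self_eq_norm_sq]
  have hi : ∀ i, Integrable (fun x : S2 => ‖((Cop (e i) : Lp V 2 μ) : S2 → V) x‖ ^ 2) μ :=
    fun i => (Lp.memLp (Cop (e i) : Lp V 2 μ)).integrable_norm_pow (by norm_num)
  simp_rw [h1]
  rw [← integral_finsetSum _ fun i _ => hi i]
  calc _ ≤ ∫ y : S2, (1 : ℝ) ∂μ := by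
        refine integral_mono_ae (integrable_finsetSum _ fun i _ => hi i) (integrable_const _) ?_
        have : ∀ᵐ x ∂μ, ∀ i, ((Cop (e i) : Lp V 2 μ) : S2 → V) x =
            ∫ y : S2, kfun x y ((e i : Lp V 2 μ) y) ∂μ := by
          rw [ae_all_iff]; exact fun i => C_k hμ Cop hC (e i)
        filter_upwards [this] with x hx
        simp_rw [hx]
        exact hs_pt x _ he'
    _ = 1 := by simp

theorem isClosed_H : IsClosed (Hsub μ : Set (Lp V 2 μ)) := by
  rw [← isSeqClosed_iff_isClosed]
  intro u f hu hf
  have h1 := tendstoInMeasure_of_tendsto_Lp hf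
  obtain ⟨ns, -, h2⟩ := h1.exists_seq_tendsto_ae
  have h3 : ∀ᵐ x ∂μ, ∀ n, (u n : S2 → V) x ∈ plane x := by
    rw [ae_all_iff]; exact fun n => hu n
  change ∀ᵐ x ∂μ, _
  filter_upwards [h2, h3] with x hx hx'
  exact (Submodule.isClosed_orthogonal (ℝ ∙ (x : V))).mem_of_tendsto hx
    (Filter.Eventually.of_forall fun n => hx' _)

theorem complete_H : CompleteSpace (Hsub μ) := (isClosed_H (μ := μ)).completeSpace_coe

end hs

section abs
variable {E : Type} [NormedAddCommGroup E] [InnerProductSpace ℝ E]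

structure Dat (C : E →L[ℝ] E) (v : ∀ j : ℕ, Fin (2 * (j + 1) + 1) → E) : Prop where
  symm : ∀ f g, ⟪C f, g⟫ = ⟪f, C g⟫
  hs : ∀ (ι : Type) [Fintype ι] (e : ι → E), Orthonormal ℝ e → ∑ i, ‖C (e i)‖ ^ 2 ≤ 1
  on : ∀ j, Orthonormal ℝ (v j)
  eig : ∀ j i, C (v j i) = lamn (j + 1) • v j i

theorem abs_lamn (j : ℕ) : |lamn (j + 1)| = 1 / (((j : ℝ) + 1) * (j + 2)) := by
  unfold lamn
  rw [abs_div, abs_pow, abs_neg, abs_one, one_pow]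
  congr 1
  rw [abs_of_nonneg (by positivity)]
  push_cast; ring

theorem lamn_inj {j k : ℕ} (h : lamn (j + 1) = lamn (k + 1)) : j = k := by
  have h1 : ∀ j k : ℕ, j < k → |lamn (k + 1)| < |lamn (j + 1)| := by
    intro j k hjk
    rw [abs_lamn, abs_lamn]
    have : (j : ℝ) < k := by exact_mod_cast hjk
    apply one_div_lt_one_div_of_lt (by positivity)
    gcongr
  rcases lt_trichotomy j k with h2 | h2 | h2
  · have := h1 _ _ h2; rw [h] at this; exact absurd this (lt_irrefl _)
  · exact h2
  · have := h1 _ _ h2; rw [h] at this; exact absurd this (lt_irrefl _)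

theorem lamn_ne (j : ℕ) : lamn (j + 1) ≠ 0 := by
  rw [← abs_pos, abs_lamn]; positivity

variable {C : E →L[ℝ] E} {v : ∀ j : ℕ, Fin (2 * (j + 1) + 1) → E}

theorem eig_orth (hs : ∀ f g, ⟪C f, g⟫ = ⟪f, C g⟫) {a b : ℝ} (hab : a ≠ b) {x y : E}
    (hx : C x = a • x) (hy : C y = b • y) : ⟪x, y⟫ = 0 := by
  have := hs x y
  rw [hx, hy, real_inner_smul_left, real_inner_smul_right] at this
  have h2 : (a - b) * ⟪x, y⟫ = 0 := by linarith
  exact (mul_eq_zero.1 h2).resolve_left (sub_ne_zero.2 hab)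

abbrev Ix (N : ℕ) : Type := Σ j : Fin N, Fin (2 * ((j : ℕ) + 1) + 1)

def fam (v : ∀ j : ℕ, Fin (2 * (j + 1) + 1) → E) (N : ℕ) (p : Ix N) : E := v p.1 p.2

theorem fam_on (D : Dat C v) (N : ℕ) : Orthonormal ℝ (fam v N) := by
  constructor
  · intro p; exact (D.on _).1 _
  · rintro ⟨j, i⟩ ⟨j', i'⟩ h
    by_cases hj : j = j'
    · subst hj
      exact (D.on j).2 (by intro h'; exact h (Sigma.ext rfl (heq_of_eq h')))
    · refine eig_orth D.symm ?_ (D.eig _ _) (D.eig _ _)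
      intro h'
      exact hj (Fin.ext (lamn_inj h'))

theorem fam_sum (D : Dat C v) (N : ℕ) : ∑ p, ‖C (fam v N p)‖ ^ 2 = 1 - 1 / ((N : ℝ) + 1) ^ 2 := by
  have h1 : ∀ p : Ix N, ‖C (fam v N p)‖ ^ 2 = |lamn (p.1 + 1)| ^ 2 := by
    intro p
    unfold fam
    rw [D.eig, norm_smul, (D.on _).1, mul_one, Real.norm_eq_abs]
  simp_rw [h1]
  rw [Fintype.sum_sigma]
  simp only [Finset.sum_const, Finset.card_univ, Fintype.card_fin, nsmul_eq_mul]
  rw [Fin.sum_univ_eq_sum_range (fun j => ((2 * (j + 1) + 1 : ℕ) : ℝ) * |lamn (j + 1)| ^ 2)]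
  clear h1
  induction N with
  | zero => simp
  | succ n ih =>
    rw [Finset.sum_range_succ, ih, abs_lamn]
    push_cast
    field_simp
    ring

theorem tail (D : Dat C v) (N : ℕ) (u : E) (hu : ∀ p : Ix N, ⟪fam v N p, u⟫ = 0) :
    ‖C u‖ ≤ 1 / ((N : ℝ) + 1) * ‖u‖ := by
  by_cases h0 : u = 0
  · simp [h0]
  have hn : ‖u‖ ≠ 0 := norm_ne_zero_iff.2 h0
  let w : E := ‖u‖⁻¹ • u
  have hw : ‖w‖ = 1 := by simp [w, norm_smul, hn]
  let e : Option (Ix N) → E := fun o => o.elim w (fam v N)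
  have hfw : ∀ p, ⟪fam v N p, w⟫ = 0 := by
    intro p; simp only [w]; rw [real_inner_smul_right, hu, mul_zero]
  have he : Orthonormal ℝ e := by
    constructor
    · rintro (_ | p)
      · exact hw
      · exact (fam_on D N).1 p
    · rintro (_ | p) (_ | q) h
      · exact absurd rfl h
      · change ⟪w, fam v N q⟫ = 0
        rw [real_inner_comm, hfw]
      · exact hfw p
      · exact (fam_on D N).2 (fun h' => h (by rw [h']))
  have h1 := D.hs _ e he
  rw [Fintype.sum_option] at h1
  change ‖C w‖ ^ 2 + ∑ p, ‖C (fam v N p)‖ ^ 2 ≤ 1 at h1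
  rw [fam_sum D] at h1
  have h2 : ‖C w‖ ^ 2 ≤ (1 / ((N : ℝ) + 1)) ^ 2 := by
    rw [div_pow, one_pow]; linarith
  have h3 : ‖C w‖ ≤ 1 / ((N : ℝ) + 1) := (sq_le_sq₀ (norm_nonneg _) (by positivity)).1 h2
  have h4 : ‖C u‖ = ‖C w‖ * ‖u‖ := by
    simp only [w]
    rw [map_smul, norm_smul, norm_inv, norm_norm]
    field_simp
  rw [h4]
  gcongr

theorem tail_zero (D : Dat C v) (u : E) (hu : ∀ j i, ⟪v j i, u⟫ = 0) : C u = 0 := by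
  have h1 : ∀ N : ℕ, ‖C u‖ ≤ 1 / ((N : ℝ) + 1) * ‖u‖ := fun N => tail D N u fun p => hu _ _
  have h2 : Filter.Tendsto (fun N : ℕ => 1 / ((N : ℝ) + 1) * ‖u‖) Filter.atTop (nhds (0 * ‖u‖)) :=
    tendsto_one_div_add_atTop_nhds_zero_nat.mul_const _
  have h3 := ge_of_tendsto' h2 h1
  rw [zero_mul] at h3
  exact norm_le_zero_iff.1 h3

theorem compact [CompleteSpace E] (D : Dat C v) : IsCompactOperator C := by
  let S : ℕ → Submodule ℝ E := fun N => span ℝ (Set.range (fam v N))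
  have hfin : ∀ N, FiniteDimensional ℝ (S N) := fun N =>
    FiniteDimensional.span_of_finite ℝ (Set.finite_range _)
  let T : ℕ → E →L[ℝ] E := fun N => (C.comp (S N).subtypeL).comp (S N).orthogonalProjectionOnto
  have hT : Filter.Tendsto T Filter.atTop (nhds C) := by
    rw [tendsto_iff_norm_sub_tendsto_zero]
    refine squeeze_zero (fun _ => norm_nonneg _) (fun N => ?_)
      (tendsto_one_div_add_atTop_nhds_zero_nat (𝕜 := ℝ))
    refine ContinuousLinearMap.opNorm_le_bound _ (by positivity) fun u => ?_
    have h1 : (T N - C) u = - C (u - (S N).starProjection u) := by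
      simp [T]
    rw [h1, norm_neg]
    refine (tail D N _ fun p => ?_).trans ?_
    · exact (Submodule.sub_starProjection_mem_orthogonal u) _ (subset_span ⟨p, rfl⟩)
    · gcongr
      rw [← Submodule.starProjection_orthogonal_val]
      exact Submodule.norm_starProjection_apply_le _ _
  refine isCompactOperator_of_tendsto hT (Filter.Eventually.of_forall fun N => ?_)
  have : IsCompactOperator (C.comp (S N).subtypeL) := by
    have := hfin N
    have h2 : ProperSpace (S N) := FiniteDimensional.proper ℝ (S N)
    exact isCompactOperator_of_locallyCompactSpace_rng _
  exact this.comp_clm _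

theorem eigval (D : Dat C v) (lam : ℝ) (hl : lam ≠ 0) :
    Module.End.HasEigenvalue (C : E →ₗ[ℝ] E) lam ↔ ∃ j : ℕ, lam = lamn (j + 1) := by
  constructor
  · intro h
    by_contra! hne
    obtain ⟨u, hu⟩ := h.exists_hasEigenvector
    have h1 : C u = lam • u := hu.apply_eq_smul
    have h2 := tail_zero D u fun j i => eig_orth D.symm (hne j).symm (D.eig j i) h1
    rw [h1] at h2
    exact (smul_ne_zero hl hu.2) h2
  · rintro ⟨j, rfl⟩
    refine Module.End.hasEigenvalue_of_hasEigenvector (x := v j 0) ⟨?_, (D.on j).ne_zero _⟩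
    rw [Module.End.mem_eigenspace_iff]
    exact D.eig j 0

theorem eigdim (D : Dat C v) (j : ℕ) :
    Module.finrank ℝ (Module.End.eigenspace (C : E →ₗ[ℝ] E) (lamn (j + 1))) = 2 * (j + 1) + 1 := by
  have h : Module.End.eigenspace (C : E →ₗ[ℝ] E) (lamn (j + 1)) = span ℝ (Set.range (v j)) := by
    apply le_antisymm
    · intro u hu
      rw [Module.End.mem_eigenspace_iff] at hu
      change C u = _ at hu
      let w := u - ∑ i, ⟪v j i, u⟫ • v j i
      have hw : C w = lamn (j + 1) • w := by
        simp only [w, map_sub, map_sum, map_smul, hu, D.eig, smul_sub, Finset.smul_sum]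
        congr 1
        exact Finset.sum_congr rfl fun i _ => smul_comm _ _ _
      have hz : C w = 0 := by
        refine tail_zero D w fun k i => ?_
        by_cases hk : k = j
        · subst hk
          simp only [w]
          rw [inner_sub_right, (D.on k).inner_right_fintype, sub_self]
        · exact eig_orth D.symm (fun h => hk (lamn_inj h)) (D.eig k i) hw
      have hw0 : w = 0 := by
        rw [hw] at hz
        exact (smul_eq_zero.1 hz).resolve_left (lamn_ne j)
      rw [sub_eq_zero.1 hw0]
      exact sum_mem fun i _ => smul_mem _ _ (subset_span ⟨i, rfl⟩)
    · rw [span_le]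
      rintro _ ⟨i, rfl⟩
      exact Module.End.mem_eigenspace_iff.2 (D.eig j i)
  rw [h, finrank_span_eq_card (D.on j).linearIndependent, Fintype.card_fin]

end abs

/-- Let `μ` be the rotation invariant probability measure on the sphere and
let `C` be the common lines operator on `H`, i.e. the operator determined by
`(Cs)(x) = ∫ C(x,y)(s(y)) dy`.  Then `C` is a compact self-adjoint operator whose set of
nonzero eigenvalues is exactly `{ (-1)^(n-1)/(n(n+1)) : n = 1, 2, ... }`, and for every
`n ≥ 1` the eigenspace for the eigenvalue `(-1)^(n-1)/(n(n+1))` has dimension `2n+1`. -/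
theorem common_lines_operator_spectrum
    (μ : Measure S2) [IsProbabilityMeasure μ]
    (hμ : ∀ g : V ≃ₗᵢ[ℝ] V, MeasurePreserving (sphereMap g) μ μ)
    (Cop : Hsub μ →L[ℝ] Hsub μ)
    (hC : ∀ s : Hsub μ, ∀ᵐ x ∂μ,
      ((Cop s : Lp V 2 μ) : S2 → V) x = ∫ y, Cker x y (((s : Lp V 2 μ) : S2 → V) y) ∂μ) :
    IsCompactOperator Cop ∧
    (∀ f g : Hsub μ, ⟪Cop f, g⟫ = ⟪f, Cop g⟫) ∧
    (∀ lam : ℝ, lam ≠ 0 →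
      (Module.End.HasEigenvalue (Cop : Hsub μ →ₗ[ℝ] Hsub μ) lam ↔
        ∃ n : ℕ, 1 ≤ n ∧ lam = (-1 : ℝ) ^ (n - 1) / (n * (n + 1)))) ∧
    (∀ n : ℕ, 1 ≤ n →
      Module.finrank ℝ
        (Module.End.eigenspace (Cop : Hsub μ →ₗ[ℝ] Hsub μ)
          ((-1 : ℝ) ^ (n - 1) / (n * (n + 1)))) = 2 * n + 1) := by
  have hcomp : CompleteSpace (Hsub μ) := complete_H
  choose v hv using fun j : ℕ => eig_family hμ Cop hC (j + 1) (Nat.succ_pos j)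
  have D : Dat Cop v :=
    ⟨C_symm hμ Cop hC, fun ι _ e he => hs_bound hμ Cop hC e he, fun j => (hv j).1, fun j => (hv j).2⟩
  refine ⟨compact D, D.symm, fun lam hl => ?_, fun n hn => ?_⟩
  · rw [eigval D lam hl]
    constructor
    · rintro ⟨j, hj⟩
      exact ⟨j + 1, Nat.succ_pos j, hj⟩
    · rintro ⟨n, hn, h⟩
      obtain ⟨j, rfl⟩ := Nat.exists_eq_add_of_le' hn
      exact ⟨j, h⟩
  · obtain ⟨j, rfl⟩ := Nat.exists_eq_add_of_le' hn
    exact eigdim D j
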